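/- Let H ⊂ ℝⁿ be a Hanner polytope. Among all initial positions consisting of a coordinate q₁ ∈ ∂H and a momentum p₁ ∈ ∂H° such that the vector −n_H(q₁) placed at p₁ points into the interior of H°, all but a negligible (lower-dimensional) set generate, by the billiard rules, a closed simple classical billiard trajectory of length 4 in the configuration H × H°. -/

import Mathlib

open MeasureTheory
open scoped Pointwise

namespace Billiard

/-- The canonical pairing `⟨p, q⟩ = ∑ i, p i * q i` on `ℝⁿ`. -/
noncomputable def pairing {n : ℕ} (p q : Fin n → ℝ) : ℝ := ∑ i, p i * q i

/-- The polar set `H° = {p : ⟨p, q⟩ ≤ 1 for all q ∈ H}`. -/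
def polarSet {n : ℕ} (H : Set (Fin n → ℝ)) : Set (Fin n → ℝ) :=
  {p | ∀ q ∈ H, pairing p q ≤ 1}

/-- The support function of `T`, i.e. the norm `‖v‖_{T} = max_{p ∈ T} ⟨p, v⟩`. -/
noncomputable def suppFn {n : ℕ} (T : Set (Fin n → ℝ)) (v : Fin n → ℝ) : ℝ :=
  sSup ((fun p => pairing p v) '' T)

/-- Projection of `ℝ^{k+l}` onto the first `k` coordinates. -/
def splitL {k l : ℕ} (x : Fin (k + l) → ℝ) : Fin k → ℝ := fun i => x (Fin.castAdd l i)

/-- Projection of `ℝ^{k+l}` onto the last `l` coordinates. -/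
def splitR {k l : ℕ} (x : Fin (k + l) → ℝ) : Fin l → ℝ := fun j => x (Fin.natAdd k j)

/-- `K ⊕_∞ L = K × L ⊂ ℝ^{k+l}`. -/
def sumInfty {k l : ℕ} (K : Set (Fin k → ℝ)) (L : Set (Fin l → ℝ)) :
    Set (Fin (k + l) → ℝ) :=
  {x | splitL x ∈ K ∧ splitR x ∈ L}

/-- `K ⊕₁ L = conv((K × {0}) ∪ ({0} × L)) ⊂ ℝ^{k+l}`. -/
def sumOne {k l : ℕ} (K : Set (Fin k → ℝ)) (L : Set (Fin l → ℝ)) :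
    Set (Fin (k + l) → ℝ) :=
  convexHull ℝ ({x | splitL x ∈ K ∧ splitR x = 0} ∪ {x | splitL x = 0 ∧ splitR x ∈ L})

/-- Hanner polytopes, defined inductively: the segment `[-1,1] ⊂ ℝ` is a Hanner polytope,
and `K ⊕_∞ L`, `K ⊕₁ L` are Hanner polytopes whenever `K`, `L` are. -/
inductive IsHanner : ∀ n : ℕ, Set (Fin n → ℝ) → Prop
  | segment : IsHanner 1 {x | |x 0| ≤ 1}
  | inftySum {k l : ℕ} {K : Set (Fin k → ℝ)} {L : Set (Fin l → ℝ)} :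
      IsHanner k K → IsHanner l L → IsHanner (k + l) (sumInfty K L)
  | oneSum {k l : ℕ} {K : Set (Fin k → ℝ)} {L : Set (Fin l → ℝ)} :
      IsHanner k K → IsHanner l L → IsHanner (k + l) (sumOne K L)

/-- `u` is the outer normal of the facet of `H` containing `q`, normalized to lie in `∂H°`:
`u ∈ H°`, `⟨u, q⟩ = 1`, and `u` is the unique such vector. The uniqueness encodes that `q`
lies in the relative interior of a facet of the polytope `H`. -/
def IsUniqueNormal {n : ℕ} (H : Set (Fin n → ℝ)) (q u : Fin n → ℝ) : Prop :=
  u ∈ polarSet H ∧ pairing u q = 1 ∧ ∀ v ∈ polarSet H, pairing v q = 1 → v = u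

/-- A classical closed billiard trajectory in the configuration `H × T` (with `T = H°`):
closed `m`-periodic sequences of coordinates `q i ∈ ∂H` and momenta `p i ∈ ∂T`, each in
the relative interior of a facet (encoded by uniqueness of the normalized outer normal),
satisfying the reflection rule `p (i+1) − p i = −λ i • n_H(q i)` with `λ i > 0` and the
motion rule `q (i+1) − q i = μ i • n_T(p (i+1))` with `μ i > 0`. -/
structure ClassicalTraj (n : ℕ) (H T : Set (Fin n → ℝ)) where
  m : ℕ
  m_pos : 0 < m
  q : ℕ → Fin n → ℝ
  p : ℕ → Fin n → ℝ
  nq : ℕ → Fin n → ℝ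
  np : ℕ → Fin n → ℝ
  lam : ℕ → ℝ
  mu : ℕ → ℝ
  q_mem : ∀ i, q i ∈ frontier H
  p_mem : ∀ i, p i ∈ frontier T
  q_periodic : ∀ i, q (i + m) = q i
  p_periodic : ∀ i, p (i + m) = p i
  nq_spec : ∀ i, IsUniqueNormal H (q i) (nq i)
  np_spec : ∀ i, IsUniqueNormal T (p i) (np i)
  lam_pos : ∀ i, 0 < lam i
  mu_pos : ∀ i, 0 < mu i
  reflection : ∀ i, p (i + 1) - p i = (-(lam i)) • nq i
  motion : ∀ i, q (i + 1) - q i = mu i • np (i + 1)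

/-- A trajectory is simple if it does not traverse the same closed route more than once,
i.e. it has no period smaller than `m`. -/
def ClassicalTraj.IsSimple {n : ℕ} {H T : Set (Fin n → ℝ)}
    (τ : ClassicalTraj n H T) : Prop :=
  ∀ d : ℕ, 0 < d → d < τ.m → ¬(∀ i, τ.q (i + d) = τ.q i ∧ τ.p (i + d) = τ.p i)

/-- The length of the trajectory, measured in the norm `‖·‖_T` with `T = H°`. -/
noncomputable def ClassicalTraj.length {n : ℕ} {H T : Set (Fin n → ℝ)}
    (τ : ClassicalTraj n H T) : ℝ :=
  ∑ i ∈ Finset.range τ.m, suppFn T (τ.q (i + 1) - τ.q i)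

/-- The trace of a trajectory in phase space `∂H × ∂T`: the union of the segments swept by
the coordinate while the momentum is constant, and by the momentum while the coordinate is
constant. -/
noncomputable def ClassicalTraj.trace {n : ℕ} {H T : Set (Fin n → ℝ)}
    (τ : ClassicalTraj n H T) : Set ((Fin n → ℝ) × (Fin n → ℝ)) :=
  ⋃ i ∈ Finset.range τ.m,
    ((fun x => (x, τ.p (i + 1))) '' segment ℝ (τ.q i) (τ.q (i + 1)) ∪
      (fun y => (τ.q i, y)) '' segment ℝ (τ.p i) (τ.p (i + 1)))

/-- The coordinate polygonal line of a trajectory, as a subset of `∂H`. -/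
noncomputable def ClassicalTraj.coordTrace {n : ℕ} {H T : Set (Fin n → ℝ)}
    (τ : ClassicalTraj n H T) : Set (Fin n → ℝ) :=
  ⋃ i ∈ Finset.range τ.m, segment ℝ (τ.q i) (τ.q (i + 1))

/-- The momentum polygonal line of a trajectory, as a subset of `∂T`. -/
noncomputable def ClassicalTraj.momTrace {n : ℕ} {H T : Set (Fin n → ℝ)}
    (τ : ClassicalTraj n H T) : Set (Fin n → ℝ) :=
  ⋃ i ∈ Finset.range τ.m, segment ℝ (τ.p i) (τ.p (i + 1))

end Billiard

/-!
Write `H = A°` and `H° = B°`, where `A` consists of the facet normals of `H` and `B` of its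
vertices. Run two clocks along a billiard orbit: `t` measures the time for which the coordinate
moves, `s` the time for which the momentum moves. For every Hanner polytope the following holds, as
long as the orbit avoids the faces of codimension at least two: when the clock of a variable reads
`2`, this variable has reached its antipode, and until then it recedes at unit speed from the facet
on which it started. Hence the orbit passes through `(-q₁, -p₁)` at `t = 2` and closes at `t = 4`,
not earlier, and `t` is the length of the orbit.

The claim is proved along the inductive construction of `H`. For the segment it is read off. The
substitution `(q, p) ↦ (p, -q)` exchanges `H` and `H°`, and therefore the two kinds of sums. For a
product `K × L`, from the time at which the momentum `p = (p_K, p_L)` is on the boundary of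
`K° ⊕₁ L°`, the norms `a` and `b` of `p_K` and `p_L` are constant, so that `(q_K, p_K / a)` and
`(q_L, p_L / b)` run through billiard orbits of the factors with `t = t_K = t_L` and
`s = a s_K + b s_L`. Since `q_K` and `q_L` are never both on the boundary, the clocks `s_K` and
`s_L` pass `2` together.

The orbits that meet a face of codimension at least two start in the images of a set of codimension
three in `ℝⁿ × ℝⁿ` under the finite compositions of finitely many Lipschitz maps, the inverses of
the billiard moves. These images are negligible.
-/

namespace Billiard

section Pairing

variable {n k l : ℕ}

theorem pairing_comm (p q : Fin n → ℝ) : pairing p q = pairing q p := dotProduct_comm p q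

@[simp]
theorem pairing_add_right (p q r : Fin n → ℝ) : pairing p (q + r) = pairing p q + pairing p r :=
  dotProduct_add p q r

@[simp]
theorem pairing_sub_right (p q r : Fin n → ℝ) : pairing p (q - r) = pairing p q - pairing p r :=
  dotProduct_sub p q r

@[simp]
theorem pairing_smul_right (c : ℝ) (p q : Fin n → ℝ) : pairing p (c • q) = c * pairing p q :=
  dotProduct_smul c p q

@[simp]
theorem pairing_neg_right (p q : Fin n → ℝ) : pairing p (-q) = -pairing p q := dotProduct_neg p q

@[simp]
theorem pairing_zero_right (p : Fin n → ℝ) : pairing p 0 = 0 := dotProduct_zero p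

@[simp]
theorem pairing_sub_left (p q r : Fin n → ℝ) : pairing (p - q) r = pairing p r - pairing q r :=
  sub_dotProduct p q r

@[simp]
theorem pairing_neg_left (p q : Fin n → ℝ) : pairing (-p) q = -pairing p q := neg_dotProduct p q

@[simp]
theorem pairing_zero_left (q : Fin n → ℝ) : pairing 0 q = 0 := zero_dotProduct q

theorem pairing_self_eq_zero {x : Fin n → ℝ} : pairing x x = 0 ↔ x = 0 := dotProduct_self_eq_zero

@[fun_prop]
theorem continuous_pairing (p : Fin n → ℝ) : Continuous (pairing p) := by
  unfold pairing
  fun_prop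

@[simp]
theorem splitL_append (x : Fin k → ℝ) (y : Fin l → ℝ) : splitL (Fin.append x y) = x :=
  funext (Fin.append_left x y)

@[simp]
theorem splitR_append (x : Fin k → ℝ) (y : Fin l → ℝ) : splitR (Fin.append x y) = y :=
  funext (Fin.append_right x y)

@[simp]
theorem splitL_add (x y : Fin (k + l) → ℝ) : splitL (x + y) = splitL x + splitL y := rfl

@[simp]
theorem splitR_add (x y : Fin (k + l) → ℝ) : splitR (x + y) = splitR x + splitR y := rfl

@[simp]
theorem splitL_sub (x y : Fin (k + l) → ℝ) : splitL (x - y) = splitL x - splitL y := rfl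

@[simp]
theorem splitR_sub (x y : Fin (k + l) → ℝ) : splitR (x - y) = splitR x - splitR y := rfl

@[simp]
theorem splitL_smul (c : ℝ) (x : Fin (k + l) → ℝ) : splitL (c • x) = c • splitL x := rfl

@[simp]
theorem splitR_smul (c : ℝ) (x : Fin (k + l) → ℝ) : splitR (c • x) = c • splitR x := rfl

@[simp]
theorem splitL_neg (x : Fin (k + l) → ℝ) : splitL (-x) = -splitL x := rfl

@[simp]
theorem splitR_neg (x : Fin (k + l) → ℝ) : splitR (-x) = -splitR x := rfl

theorem ext_split {x y : Fin (k + l) → ℝ} (hl : splitL x = splitL y) (hr : splitR x = splitR y) :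
    x = y :=
  funext <| Fin.addCases (congrFun hl) (congrFun hr)

theorem append_injective2 :
    Function.Injective2 (Fin.append : (Fin k → ℝ) → (Fin l → ℝ) → Fin (k + l) → ℝ) :=
  fun _ _ _ _ h => ⟨by simpa using congrArg splitL h, by simpa using congrArg splitR h⟩

theorem append_neg (x : Fin k → ℝ) (y : Fin l → ℝ) : Fin.append (-x) (-y) = -Fin.append x y :=
  ext_split (by simp) (by simp)

theorem pairing_eq_split (x y : Fin (k + l) → ℝ) :
    pairing x y = pairing (splitL x) (splitL y) + pairing (splitR x) (splitR y) :=
  Fin.sum_univ_add _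

@[simp]
theorem pairing_append_left (x : Fin k → ℝ) (y : Fin l → ℝ) (z : Fin (k + l) → ℝ) :
    pairing (Fin.append x y) z = pairing x (splitL z) + pairing y (splitR z) := by
  rw [pairing_eq_split, splitL_append, splitR_append]

end Pairing

section Polar

variable {n : ℕ} {A : Set (Fin n → ℝ)} {u x : Fin n → ℝ}

theorem mem_polarSet_iff : x ∈ polarSet A ↔ ∀ u ∈ A, pairing u x ≤ 1 :=
  forall₂_congr fun u _ => by rw [pairing_comm]

theorem pairing_le_one_of_mem_polarSet (hx : x ∈ polarSet A) (hu : u ∈ A) : pairing u x ≤ 1 :=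
  mem_polarSet_iff.1 hx u hu

theorem convex_polarSet (A : Set (Fin n → ℝ)) : Convex ℝ (polarSet A) := by
  intro x hx y hy a b ha hb hab
  refine mem_polarSet_iff.2 fun u hu => ?_
  have hux := pairing_le_one_of_mem_polarSet hx hu
  have huy := pairing_le_one_of_mem_polarSet hy hu
  rw [pairing_add_right, pairing_smul_right, pairing_smul_right]
  nlinarith

/-- The vectors of `A` whose supporting hyperplane `{x | ⟨u, x⟩ = 1}` contains `x`. For `x` in the
polytope `polarSet A` these are the normals of the facets through `x`, so that the set is nonempty
on the boundary, and a subsingleton off the faces of codimension at least two. -/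
def active (A : Set (Fin n → ℝ)) (x : Fin n → ℝ) : Set (Fin n → ℝ) :=
  {u ∈ A | pairing u x = 1}

theorem neg_mem_active_neg (hA : ∀ u ∈ A, -u ∈ A) (hu : u ∈ active A x) : -u ∈ active A (-x) :=
  ⟨hA u hu.1, by simpa using hu.2⟩

theorem active_neg (hA : ∀ u ∈ A, -u ∈ A) (x : Fin n → ℝ) : active A (-x) = -active A x :=
  Set.Subset.antisymm (fun u hu => by simpa using neg_mem_active_neg hA hu)
    fun u hu => by simpa using neg_mem_active_neg hA hu

theorem active_eq_singleton (hs : (active A x).Subsingleton) (hu : u ∈ active A x) :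
    active A x = {u} :=
  hs.eq_singleton_of_mem hu

end Polar

/-- `A` is the set of facet normals and `B` the set of vertices of a centrally symmetric polytope,
the normals being scaled so that the facet with normal `u` lies in `{x | ⟨u, x⟩ = 1}`. The last
field is the duality of `polarSet A` and `polarSet B`, in homogeneous form. -/
structure IsDualPair {n : ℕ} (A B : Set (Fin n → ℝ)) : Prop where
  finite_left : A.Finite
  finite_right : B.Finite
  nonempty_left : A.Nonempty
  neg_mem_left : ∀ u ∈ A, -u ∈ A
  neg_mem_right : ∀ w ∈ B, -w ∈ B
  pairing_le_one : ∀ u ∈ A, ∀ w ∈ B, pairing u w ≤ 1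
  active_right_nonempty : ∀ u ∈ A, (active B u).Nonempty
  active_left_nonempty : ∀ w ∈ B, (active A w).Nonempty
  pairing_le_mul : ∀ (p q : Fin n → ℝ) (a c : ℝ), 0 ≤ a → 0 ≤ c → (∀ w ∈ B, pairing w p ≤ a) →
    (∀ u ∈ A, pairing u q ≤ c) → pairing p q ≤ a * c

namespace IsDualPair

variable {n : ℕ} {A B : Set (Fin n → ℝ)} {u x : Fin n → ℝ}

theorem nonempty_right (h : IsDualPair A B) : B.Nonempty :=
  let ⟨u, hu⟩ := h.nonempty_left
  (h.active_right_nonempty u hu).mono (Set.sep_subset _ _)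

theorem swap (h : IsDualPair A B) : IsDualPair B A where
  finite_left := h.finite_right
  finite_right := h.finite_left
  nonempty_left := h.nonempty_right
  neg_mem_left := h.neg_mem_right
  neg_mem_right := h.neg_mem_left
  pairing_le_one u hu w hw := pairing_comm u w ▸ h.pairing_le_one w hw u hu
  active_right_nonempty := h.active_left_nonempty
  active_left_nonempty := h.active_right_nonempty
  pairing_le_mul p q a c ha hc hp hq := by
    rw [pairing_comm, mul_comm]
    exact h.pairing_le_mul q p c a hc ha hq hp

theorem ne_zero (h : IsDualPair A B) (hu : u ∈ A) : u ≠ 0 := by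
  rintro rfl
  obtain ⟨w, -, hw⟩ := h.active_right_nonempty 0 hu
  simp at hw

theorem one_le_dim (h : IsDualPair A B) : 1 ≤ n := by
  obtain ⟨u, hu⟩ := h.nonempty_left
  refine Nat.one_le_iff_ne_zero.2 ?_
  rintro rfl
  exact h.ne_zero hu (Subsingleton.elim u 0)

theorem exists_max (h : IsDualPair A B) (x : Fin n → ℝ) :
    ∃ u ∈ A, 0 ≤ pairing u x ∧ ∀ v ∈ A, pairing v x ≤ pairing u x := by
  obtain ⟨u, hu, hmax⟩ := A.exists_max_image (pairing · x) h.finite_left h.nonempty_left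
  have hneg := hmax (-u) (h.neg_mem_left u hu)
  rw [pairing_neg_left] at hneg
  exact ⟨u, hu, by linarith, hmax⟩

theorem eq_zero_of_forall_pairing_le_zero (h : IsDualPair A B) (hx : ∀ u ∈ A, pairing u x ≤ 0) :
    x = 0 := by
  obtain ⟨w, -, hw₀, hw⟩ := h.swap.exists_max x
  have hxx := h.pairing_le_mul x x _ 0 hw₀ le_rfl hw hx
  rw [mul_zero] at hxx
  exact pairing_self_eq_zero.1 (hxx.antisymm (Finset.sum_nonneg fun i _ => mul_self_nonneg (x i)))

theorem exists_mem_polarSet_eq_smul (h : IsDualPair A B) {c : ℝ} (hc : 0 ≤ c)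
    (hx : ∀ u ∈ A, pairing u x ≤ c) : ∃ y ∈ polarSet A, x = c • y := by
  rcases hc.eq_or_lt with rfl | hc
  · exact ⟨0, mem_polarSet_iff.2 fun u _ => by simp,
      by rw [h.eq_zero_of_forall_pairing_le_zero hx, smul_zero]⟩
  · refine ⟨c⁻¹ • x, mem_polarSet_iff.2 fun u hu => ?_, (smul_inv_smul₀ hc.ne' x).symm⟩
    rw [pairing_smul_right, inv_mul_le_iff₀ hc, mul_one]
    exact hx u hu

theorem polarSet_polarSet (h : IsDualPair A B) : polarSet (polarSet A) = polarSet B := by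
  ext p
  refine ⟨fun hp w hw => hp w (mem_polarSet_iff.2 fun u hu => h.pairing_le_one u hu w hw),
    fun hp q hq => ?_⟩
  simpa using h.pairing_le_mul p q 1 1 zero_le_one zero_le_one (mem_polarSet_iff.1 hp)
    (mem_polarSet_iff.1 hq)

theorem neg_one_le_pairing (h : IsDualPair A B) (hx : x ∈ polarSet A) (hu : u ∈ A) :
    -1 ≤ pairing u x := by
  have := pairing_le_one_of_mem_polarSet hx (h.neg_mem_left u hu)
  rw [pairing_neg_left] at this
  linarith

theorem neg_mem_polarSet (h : IsDualPair A B) (hx : x ∈ polarSet A) : -x ∈ polarSet A :=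
  mem_polarSet_iff.2 fun u hu => by
    rw [pairing_neg_right]
    linarith [h.neg_one_le_pairing hx hu]

end IsDualPair

/-- The facet normals of `K × L`, given those of `K` and `L`; equivalently, the vertices of
`K ⊕₁ L`, given those of `K` and `L`. -/
def prodNormals {k l : ℕ} (A : Set (Fin k → ℝ)) (A' : Set (Fin l → ℝ)) :
    Set (Fin (k + l) → ℝ) :=
  (fun u => Fin.append u 0) '' A ∪ (fun u => Fin.append 0 u) '' A'

/-- The vertices of `K × L`, given those of `K` and `L`; equivalently, the facet normals of
`K ⊕₁ L`, given those of `K` and `L`. -/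
def prodVertices {k l : ℕ} (B : Set (Fin k → ℝ)) (B' : Set (Fin l → ℝ)) :
    Set (Fin (k + l) → ℝ) :=
  Set.image2 Fin.append B B'

section Prod

variable {k l : ℕ} {A B : Set (Fin k → ℝ)} {A' B' : Set (Fin l → ℝ)}

theorem append_zero_mem_prodNormals {u : Fin k → ℝ} (hu : u ∈ A) (A' : Set (Fin l → ℝ)) :
    Fin.append u 0 ∈ prodNormals A A' :=
  Or.inl (Set.mem_image_of_mem _ hu)

theorem zero_append_mem_prodNormals (A : Set (Fin k → ℝ)) {u : Fin l → ℝ} (hu : u ∈ A') :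
    Fin.append 0 u ∈ prodNormals A A' :=
  Or.inr (Set.mem_image_of_mem _ hu)

theorem forall_mem_prodNormals {P : (Fin (k + l) → ℝ) → Prop} :
    (∀ u ∈ prodNormals A A', P u) ↔
      (∀ u ∈ A, P (Fin.append u 0)) ∧ ∀ u ∈ A', P (Fin.append 0 u) := by
  simp only [prodNormals, Set.mem_union, or_imp, forall_and, Set.forall_mem_image]

theorem polarSet_prodNormals (A : Set (Fin k → ℝ)) (A' : Set (Fin l → ℝ)) :
    polarSet (prodNormals A A') = sumInfty (polarSet A) (polarSet A') := by
  ext x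
  simp [mem_polarSet_iff, forall_mem_prodNormals, sumInfty]

theorem active_prodNormals (A : Set (Fin k → ℝ)) (A' : Set (Fin l → ℝ)) (x : Fin (k + l) → ℝ) :
    active (prodNormals A A') x = prodNormals (active A (splitL x)) (active A' (splitR x)) := by
  ext u
  constructor
  · rintro ⟨⟨u, hu, rfl⟩ | ⟨u, hu, rfl⟩, hux⟩
    · exact Or.inl ⟨u, ⟨hu, by simpa using hux⟩, rfl⟩
    · exact Or.inr ⟨u, ⟨hu, by simpa using hux⟩, rfl⟩
  · rintro (⟨u, ⟨hu, hux⟩, rfl⟩ | ⟨u, ⟨hu, hux⟩, rfl⟩)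
    · exact ⟨append_zero_mem_prodNormals hu A', by simpa using hux⟩
    · exact ⟨zero_append_mem_prodNormals A hu, by simpa using hux⟩

namespace IsDualPair

theorem segment : IsDualPair ({1, -1} : Set (Fin 1 → ℝ)) {1, -1} where
  finite_left := Set.toFinite _
  finite_right := Set.toFinite _
  nonempty_left := Set.insert_nonempty _ _
  neg_mem_left := by simp
  neg_mem_right := by simp
  pairing_le_one := by simp [pairing]
  active_right_nonempty u hu := ⟨u, hu, by rcases hu with rfl | rfl <;> simp [pairing]⟩
  active_left_nonempty u hu := ⟨u, hu, by rcases hu with rfl | rfl <;> simp [pairing]⟩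
  pairing_le_mul p q a c ha _ hp hq := by
    simp only [Set.mem_insert_iff, Set.mem_singleton_iff, forall_eq_or_imp, forall_eq, pairing,
      Finset.univ_unique, Finset.sum_singleton, Pi.one_apply, Pi.neg_apply, one_mul, neg_mul]
      at hp hq ⊢
    calc p default * q default ≤ |p default| * |q default| :=
        (le_abs_self _).trans_eq (abs_mul _ _)
      _ ≤ a * c := mul_le_mul (abs_le'.2 hp) (abs_le'.2 hq) (abs_nonneg _) ha

theorem prod (h : IsDualPair A B) (h' : IsDualPair A' B') :
    IsDualPair (prodNormals A A') (prodVertices B B') where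
  finite_left := (h.finite_left.image _).union (h'.finite_left.image _)
  finite_right := h.finite_right.image2 _ h'.finite_right
  nonempty_left := (h.nonempty_left.image _).inl
  neg_mem_left := forall_mem_prodNormals.2
    ⟨fun u hu => by
      rw [← append_neg, neg_zero]
      exact append_zero_mem_prodNormals (h.neg_mem_left u hu) _,
    fun u hu => by
      rw [← append_neg, neg_zero]
      exact zero_append_mem_prodNormals _ (h'.neg_mem_left u hu)⟩
  neg_mem_right := Set.forall_mem_image2.2 fun w hw w' hw' => by
    rw [← append_neg]
    exact Set.mem_image2_of_mem (h.neg_mem_right w hw) (h'.neg_mem_right w' hw')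
  pairing_le_one := forall_mem_prodNormals.2
    ⟨fun u hu => Set.forall_mem_image2.2 fun w hw _ _ => by simpa using h.pairing_le_one u hu w hw,
    fun u hu => Set.forall_mem_image2.2 fun _ _ w hw => by simpa using h'.pairing_le_one u hu w hw⟩
  active_right_nonempty := by
    obtain ⟨w₀, hw₀⟩ := h.nonempty_right
    obtain ⟨w₀', hw₀'⟩ := h'.nonempty_right
    refine forall_mem_prodNormals.2 ⟨fun u hu => ?_, fun u hu => ?_⟩
    · obtain ⟨w, hw, hwu⟩ := h.active_right_nonempty u hu
      exact ⟨_, Set.mem_image2_of_mem hw hw₀', by simpa using hwu⟩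
    · obtain ⟨w, hw, hwu⟩ := h'.active_right_nonempty u hu
      exact ⟨_, Set.mem_image2_of_mem hw₀ hw, by simpa using hwu⟩
  active_left_nonempty := Set.forall_mem_image2.2 fun w hw w' _ => by
    obtain ⟨u, hu⟩ := h.active_left_nonempty w hw
    rw [active_prodNormals, splitL_append]
    exact ⟨_, append_zero_mem_prodNormals hu _⟩
  pairing_le_mul p q a c _ hc hp hq := by
    obtain ⟨hqL, hqR⟩ := forall_mem_prodNormals.1 hq
    obtain ⟨w, hw, hw₀, hwmax⟩ := h.swap.exists_max (splitL p)
    obtain ⟨w', hw', hw₀', hwmax'⟩ := h'.swap.exists_max (splitR p)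
    have hL := h.pairing_le_mul _ (splitL q) _ c hw₀ hc hwmax (by simpa using hqL)
    have hR := h'.pairing_le_mul _ (splitR q) _ c hw₀' hc hwmax' (by simpa using hqR)
    have hsum := hp _ (Set.mem_image2_of_mem hw hw')
    rw [pairing_append_left] at hsum
    rw [pairing_eq_split]
    nlinarith

theorem polarSet_prodVertices (h : IsDualPair A B) (h' : IsDualPair A' B') :
    polarSet (prodVertices A A') = sumOne (polarSet A) (polarSet A') := by
  apply Set.Subset.antisymm
  · intro x hx
    obtain ⟨u, hu, hu₀, humax⟩ := h.exists_max (splitL x)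
    obtain ⟨u', hu', hu₀', humax'⟩ := h'.exists_max (splitR x)
    have hle := pairing_le_one_of_mem_polarSet hx (Set.mem_image2_of_mem hu hu')
    rw [pairing_append_left] at hle
    obtain ⟨y, hy, hxy⟩ := h.exists_mem_polarSet_eq_smul hu₀ humax
    obtain ⟨z, hz, hxz⟩ := h'.exists_mem_polarSet_eq_smul
      (c := 1 - pairing u (splitL x)) (by linarith) fun v hv => (humax' v hv).trans (by linarith)
    have hx_eq : pairing u (splitL x) • Fin.append y 0 +
        (1 - pairing u (splitL x)) • Fin.append 0 z = x :=
      ext_split (by simpa using hxy.symm) (by simpa using hxz.symm)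
    have hy_mem : Fin.append y 0 ∈ sumOne (polarSet A) (polarSet A') :=
      subset_convexHull ℝ _ (Or.inl ⟨by rwa [splitL_append], splitR_append _ _⟩)
    have hz_mem : Fin.append 0 z ∈ sumOne (polarSet A) (polarSet A') :=
      subset_convexHull ℝ _ (Or.inr ⟨splitL_append _ _, by rwa [splitR_append]⟩)
    rw [← hx_eq]
    exact convex_convexHull ℝ _ hy_mem hz_mem hu₀ (by linarith) (by ring)
  · refine convexHull_min ?_ (convex_polarSet _)
    rintro x (⟨hx, hx'⟩ | ⟨hx, hx'⟩) <;>
      refine mem_polarSet_iff.2 (Set.forall_mem_image2.2 fun u hu u' hu' => ?_)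
    · simpa [hx'] using pairing_le_one_of_mem_polarSet hx hu
    · simpa [hx] using pairing_le_one_of_mem_polarSet hx' hu'

end IsDualPair

end Prod

/-- Pairs `(A, B)` of the set of facet normals and the set of vertices of a Hanner polytope. Since
`A` and `B` may be exchanged, the `ℓ₁`-sum is the dual of the `ℓ_∞`-sum of the duals. -/
inductive IsHannerPair : ∀ {n : ℕ}, Set (Fin n → ℝ) → Set (Fin n → ℝ) → Prop
  | segment : IsHannerPair ({1, -1} : Set (Fin 1 → ℝ)) {1, -1}
  | prod {k l : ℕ} {A B : Set (Fin k → ℝ)} {A' B' : Set (Fin l → ℝ)} :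
      IsHannerPair A B → IsHannerPair A' B' →
        IsHannerPair (prodNormals A A') (prodVertices B B')
  | swap {n : ℕ} {A B : Set (Fin n → ℝ)} : IsHannerPair A B → IsHannerPair B A

theorem IsHannerPair.isDualPair {n : ℕ} {A B : Set (Fin n → ℝ)} (h : IsHannerPair A B) :
    IsDualPair A B := by
  induction h with
  | segment => exact .segment
  | prod _ _ h h' => exact h.prod h'
  | swap _ h => exact h.swap

theorem IsHanner.exists_isHannerPair {n : ℕ} {H : Set (Fin n → ℝ)} (hH : IsHanner n H) :
    ∃ A B, IsHannerPair A B ∧ H = polarSet A := by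
  induction hH with
  | segment =>
    refine ⟨_, _, .segment, ?_⟩
    ext x
    simp [mem_polarSet_iff, pairing, abs_le']
  | inftySum _ _ h h' =>
    obtain ⟨A, B, h, rfl⟩ := h
    obtain ⟨A', B', h', rfl⟩ := h'
    exact ⟨_, _, h.prod h', (polarSet_prodNormals A A').symm⟩
  | oneSum _ _ h h' =>
    obtain ⟨A, B, h, rfl⟩ := h
    obtain ⟨A', B', h', rfl⟩ := h'
    exact ⟨_, _, (h.swap.prod h'.swap).swap,
      (h.isDualPair.polarSet_prodVertices h'.isDualPair).symm⟩

section Flow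

variable {n : ℕ} {A B : Set (Fin n → ℝ)} {q p q' p' x x' : Fin n → ℝ} {t s : ℝ}

/-- A nonsingular point of the boundary of `polarSet A × polarSet B`: each of `q` and `p` lies on
at most one facet, and at least one of them lies on a facet. -/
structure IsState (A B : Set (Fin n → ℝ)) (q p : Fin n → ℝ) : Prop where
  coord_mem : q ∈ polarSet A
  mom_mem : p ∈ polarSet B
  coord_subsingleton : (active A q).Subsingleton
  mom_subsingleton : (active B p).Subsingleton
  nonempty : (active A q).Nonempty ∨ (active B p).Nonempty

theorem IsState.swap (h : IsDualPair A B) (hs : IsState A B q p) : IsState B A p (-q) where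
  coord_mem := hs.mom_mem
  mom_mem := h.neg_mem_polarSet hs.coord_mem
  coord_subsingleton := hs.mom_subsingleton
  mom_subsingleton := by
    rw [active_neg h.neg_mem_left, ← Set.image_neg_eq_neg]
    exact hs.coord_subsingleton.image _
  nonempty := by
    rw [active_neg h.neg_mem_left, Set.nonempty_neg]
    exact hs.nonempty.symm

/-- `Reaches A B q p q' p' t s`: the billiard flow leads from `(q, p)` to `(q', p')` through
nonsingular states, moving the coordinate for the time `t` and the momentum for the time `s`. A
single move need not be maximal, so that the flow may be stopped between bounces. -/
inductive Reaches (A B : Set (Fin n → ℝ)) (q p : Fin n → ℝ) :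
    (Fin n → ℝ) → (Fin n → ℝ) → ℝ → ℝ → Prop
  | refl : IsState A B q p → Reaches A B q p q p 0 0
  | momentum {q' p' u : Fin n → ℝ} {t s σ : ℝ} : Reaches A B q p q' p' t s →
      u ∈ active A q' → 0 ≤ σ → IsState A B q' (p' - σ • u) →
      Reaches A B q p q' (p' - σ • u) t (s + σ)
  | coord {q' p' w : Fin n → ℝ} {t s τ : ℝ} : Reaches A B q p q' p' t s →
      w ∈ active B p' → 0 ≤ τ → IsState A B (q' + τ • w) p' →
      Reaches A B q p (q' + τ • w) p' (t + τ) s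

namespace Reaches

theorem isState_left (h : Reaches A B q p q' p' t s) : IsState A B q p := by
  induction h with
  | refl h => exact h
  | momentum _ _ _ _ h => exact h
  | coord _ _ _ _ h => exact h

theorem isState_right (h : Reaches A B q p q' p' t s) : IsState A B q' p' := by
  cases h <;> assumption

theorem mom_time_nonneg (h : Reaches A B q p q' p' t s) : 0 ≤ s := by
  induction h with
  | refl _ => exact le_rfl
  | momentum _ _ hσ _ h => exact add_nonneg h hσ
  | coord _ _ _ _ h => exact h

theorem swap (hAB : IsDualPair A B) (h : Reaches A B q p q' p' t s) :
    Reaches B A p (-q) p' (-q') s t := by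
  induction h with
  | refl h => exact .refl (h.swap hAB)
  | @momentum q' p' u t s σ _ hu hσ hst h =>
    have e : p' - σ • u = p' + σ • -u := by rw [smul_neg, sub_eq_add_neg]
    rw [e] at hst ⊢
    exact h.coord (neg_mem_active_neg hAB.neg_mem_left hu) hσ (hst.swap hAB)
  | @coord q' p' w t s τ _ hw hτ hst h =>
    have e : -(q' + τ • w) = -q' - τ • w := by rw [neg_add, sub_eq_add_neg]
    rw [e]
    exact h.momentum hw hτ (e ▸ hst.swap hAB)

end Reaches

/-- The effect on one of the two variables of a piece of the flow that moves this variable from `x`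
to `x'` in the time `t` and the dual variable in the time `s`. After the time `2` it has reached its
antipode, and up to then it recedes at unit speed from the facet on which it started. -/
structure IsHalfPeriodic (A : Set (Fin n → ℝ)) (x x' : Fin n → ℝ) (t s : ℝ) : Prop where
  le : s < 2 → t ≤ 2
  eq_neg : t = 2 → x' = -x
  eq_or_nonempty : t = 2 → s = 2 ∨ (active A x).Nonempty
  pairing_sub : ∀ u ∈ active A x, t ≤ 2 → pairing u (x - x') = t

theorem IsHalfPeriodic.neg (hA : ∀ u ∈ A, -u ∈ A) (h : IsHalfPeriodic A x x' t s) :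
    IsHalfPeriodic A (-x) (-x') t s where
  le := h.le
  eq_neg ht := by rw [h.eq_neg ht]
  eq_or_nonempty ht := by
    rw [active_neg hA, Set.nonempty_neg]
    exact h.eq_or_nonempty ht
  pairing_sub u hu ht := by
    rw [active_neg hA] at hu
    have := h.pairing_sub _ hu ht
    simp only [pairing_sub_right, pairing_neg_left, pairing_neg_right] at this ⊢
    linarith

/-- Both variables of a piece of the billiard flow are half-periodic. This is the invariant which
all Hanner polytopes share. -/
structure IsAntipodalFlow (A B : Set (Fin n → ℝ)) (q p q' p' : Fin n → ℝ) (t s : ℝ) : Prop where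
  coord : IsHalfPeriodic A q q' t s
  mom : IsHalfPeriodic B p p' s t

theorem IsAntipodalFlow.of_swap (hA : ∀ u ∈ A, -u ∈ A)
    (h : IsAntipodalFlow B A p (-q) p' (-q') s t) : IsAntipodalFlow A B q p q' p' t s where
  coord := by simpa using h.mom.neg hA
  mom := h.coord

end Flow

section Segment

variable {x u q p q' p' : Fin 1 → ℝ} {t s : ℝ}

theorem pairing_fin_one (p q : Fin 1 → ℝ) : pairing p q = p 0 * q 0 := Fin.sum_univ_one _

theorem mem_polarSet_segment : x ∈ polarSet ({1, -1} : Set (Fin 1 → ℝ)) ↔ -1 ≤ x 0 ∧ x 0 ≤ 1 := by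
  simp [mem_polarSet_iff, pairing_fin_one, and_comm, neg_le]

theorem mem_active_segment :
    u ∈ active ({1, -1} : Set (Fin 1 → ℝ)) x ↔ u 0 = x 0 ∧ (x 0 = 1 ∨ x 0 = -1) := by
  have eq_iff (y : Fin 1 → ℝ) (c : ℝ) : y 0 = c ↔ y = fun _ => c :=
    ⟨fun h => funext fun i => by rw [Subsingleton.elim i 0, h], fun h => by rw [h]⟩
  constructor
  · rintro ⟨rfl | rfl, hu⟩
    · simp_all [pairing_fin_one]
    · simp only [pairing_fin_one, Pi.neg_apply, Pi.one_apply] at hu ⊢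
      exact ⟨by linarith, Or.inr (by linarith)⟩
  · rintro ⟨hux, hx | hx⟩
    · exact ⟨Or.inl ((eq_iff u 1).1 (hux.trans hx)), by norm_num [pairing_fin_one, hux, hx]⟩
    · exact ⟨Or.inr ((eq_iff u (-1)).1 (hux.trans hx)), by norm_num [pairing_fin_one, hux, hx]⟩

/-- From `q = 1` the momentum first falls to `-1`, then the coordinate falls to `-1`, then the
momentum rises to `1`; from then on both clocks exceed `2` as soon as they run. -/
theorem Reaches.segment_phase (h : Reaches {1, -1} {1, -1} q p q' p' t s) (hq : q 0 = 1) :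
    t = 0 ∧ q' 0 = 1 ∧ p' 0 = p 0 - s ∨
      t ≤ 2 ∧ s = 1 + p 0 ∧ q' 0 = 1 - t ∧ p' 0 = -1 ∨
      t = 2 ∧ q' 0 = -1 ∧ p' 0 = s - 2 - p 0 ∨
      2 ≤ t ∧ 3 + p 0 ≤ s ∧ (t = 2 → q' 0 = -1) ∧ (s = 2 → p' 0 = 1) := by
  have hp := (mem_polarSet_segment.1 h.isState_left.mom_mem).1
  induction h with
  | refl _ => exact Or.inl ⟨rfl, hq, (sub_zero _).symm⟩
  | momentum _ hu hσ hst h =>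
    obtain ⟨hu, hq' | hq'⟩ := mem_active_segment.1 hu <;>
      obtain ⟨hp₁, hp₂⟩ := mem_polarSet_segment.1 hst.mom_mem <;>
      simp only [Pi.sub_apply, Pi.smul_apply, smul_eq_mul, hu, hq', mul_one, mul_neg]
        at hp₁ hp₂ ⊢ <;>
      rcases h with ⟨ht, hq₁, hp'⟩ | ⟨-, hs, hq₁, hp'⟩ | ⟨ht, hq₁, hp'⟩ | ⟨ht, hs, hq₁, hp'⟩ <;>
      grind
  | coord _ hw hτ hst h =>
    obtain ⟨hw, hp' | hp'⟩ := mem_active_segment.1 hw <;>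
      obtain ⟨hq₁, hq₂⟩ := mem_polarSet_segment.1 hst.coord_mem <;>
      simp only [Pi.add_apply, Pi.smul_apply, smul_eq_mul, hw, hp', mul_one, mul_neg]
        at hq₁ hq₂ ⊢ <;>
      rcases h with ⟨ht, hq', hp⟩ | ⟨-, hs, hq', hp⟩ | ⟨ht, hq', hp⟩ | ⟨ht, hs, hq', hp⟩ <;>
      grind

theorem active_segment_nonempty (hx : x 0 = 1 ∨ x 0 = -1) :
    (active ({1, -1} : Set (Fin 1 → ℝ)) x).Nonempty :=
  ⟨x, mem_active_segment.2 ⟨rfl, hx⟩⟩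

theorem Reaches.isAntipodalFlow_segment_of_eq_one
    (h : Reaches {1, -1} {1, -1} q p q' p' t s) (hq : q 0 = 1) :
    IsAntipodalFlow {1, -1} {1, -1} q p q' p' t s := by
  obtain ⟨hp₁, hp₂⟩ := mem_polarSet_segment.1 h.isState_left.mom_mem
  obtain ⟨hp₁', -⟩ := mem_polarSet_segment.1 h.isState_right.mom_mem
  have ext_neg {x y : Fin 1 → ℝ} (hxy : y 0 = -x 0) : y = -x :=
    funext fun i => by rw [Subsingleton.elim i 0, hxy, Pi.neg_apply]
  have hs := h.mom_time_nonneg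
  have phase := h.segment_phase hq
  refine ⟨⟨fun _ => by grind, fun _ => ext_neg (by grind),
    fun _ => Or.inr (active_segment_nonempty (Or.inl hq)), fun u hu _ => ?_⟩,
    ⟨fun _ => by grind, fun _ => ext_neg (by grind), fun hs => ?_, fun w hw _ => ?_⟩⟩
  · rw [pairing_fin_one, (mem_active_segment.1 hu).1, hq, Pi.sub_apply, hq]
    grind
  · by_cases hp : p 0 = 1 ∨ p 0 = -1
    · exact Or.inr (active_segment_nonempty hp)
    · exact Or.inl (by grind)
  · obtain ⟨hw, hp | hp⟩ := mem_active_segment.1 hw <;>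
      rw [pairing_fin_one, hw, Pi.sub_apply, hp] <;> grind

theorem Reaches.isAntipodalFlow_segment (h : Reaches {1, -1} {1, -1} q p q' p' t s) :
    IsAntipodalFlow {1, -1} {1, -1} q p q' p' t s := by
  have hAB := IsDualPair.segment
  rcases h.isState_left.nonempty with ⟨u, hu⟩ | ⟨w, hw⟩
  · rcases (mem_active_segment.1 hu).2 with hq | hq
    · exact h.isAntipodalFlow_segment_of_eq_one hq
    · exact .of_swap hAB.neg_mem_left <| .of_swap hAB.neg_mem_left <|
        ((h.swap hAB).swap hAB).isAntipodalFlow_segment_of_eq_one (by simp [hq])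
  · rcases (mem_active_segment.1 hw).2 with hp | hp
    · exact .of_swap hAB.neg_mem_left <| (h.swap hAB).isAntipodalFlow_segment_of_eq_one hp
    · exact .of_swap hAB.neg_mem_left <| .of_swap hAB.neg_mem_left <| .of_swap hAB.neg_mem_left <|
        (((h.swap hAB).swap hAB).swap hAB).isAntipodalFlow_segment_of_eq_one (by simp [hp])

end Segment

section ProdState

variable {k l : ℕ} {A B S : Set (Fin k → ℝ)} {A' B' S' : Set (Fin l → ℝ)}
  {q p : Fin (k + l) → ℝ} {a b : ℝ}

theorem subsingleton_left_of_prodNormals (h : (prodNormals S S').Subsingleton) :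
    S.Subsingleton :=
  Set.subsingleton_of_image (append_injective2.left 0) S (h.anti Set.subset_union_left)

theorem subsingleton_right_of_prodNormals (h : (prodNormals S S').Subsingleton) :
    S'.Subsingleton :=
  Set.subsingleton_of_image (append_injective2.right 0) S' (h.anti Set.subset_union_right)

theorem subsingleton_left_of_prodVertices (h : (prodVertices S S').Subsingleton)
    (hS' : S'.Nonempty) : S.Subsingleton := fun _ hw _ hv =>
  let ⟨_, hw'⟩ := hS'
  (append_injective2 (h (Set.mem_image2_of_mem hw hw') (Set.mem_image2_of_mem hv hw'))).1

theorem subsingleton_right_of_prodVertices (h : (prodVertices S S').Subsingleton)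
    (hS : S.Nonempty) : S'.Subsingleton := fun _ hw _ hv =>
  let ⟨_, hw'⟩ := hS
  (append_injective2 (h (Set.mem_image2_of_mem hw' hw) (Set.mem_image2_of_mem hw' hv))).2

theorem smul_inv_mem_polarSet_iff {n : ℕ} {C : Set (Fin n → ℝ)} {x : Fin n → ℝ} {c : ℝ}
    (hc : 0 < c) : c⁻¹ • x ∈ polarSet C ↔ ∀ w ∈ C, pairing w x ≤ c := by
  simp only [mem_polarSet_iff, pairing_smul_right, inv_mul_le_iff₀ hc, mul_one]

theorem mem_active_smul_inv_iff {n : ℕ} {C : Set (Fin n → ℝ)} {w x : Fin n → ℝ} {c : ℝ}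
    (hc : 0 < c) : w ∈ active C (c⁻¹ • x) ↔ w ∈ C ∧ pairing w x = c := by
  simp only [active, Set.mem_sep_iff, pairing_smul_right, inv_mul_eq_one₀ hc.ne', eq_comm]

theorem active_prodVertices (ha : 0 < a) (hb : 0 < b) (hab : a + b = 1)
    (hL : a⁻¹ • splitL p ∈ polarSet B) (hR : b⁻¹ • splitR p ∈ polarSet B') :
    active (prodVertices B B') p =
      prodVertices (active B (a⁻¹ • splitL p)) (active B' (b⁻¹ • splitR p)) := by
  rw [smul_inv_mem_polarSet_iff ha] at hL
  rw [smul_inv_mem_polarSet_iff hb] at hR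
  ext x
  constructor
  · rintro ⟨⟨w, hw, w', hw', rfl⟩, hx⟩
    rw [pairing_append_left] at hx
    have hwL := hL w hw
    have hwR := hR w' hw'
    exact Set.mem_image2_of_mem ((mem_active_smul_inv_iff ha).2 ⟨hw, by linarith⟩)
      ((mem_active_smul_inv_iff hb).2 ⟨hw', by linarith⟩)
  · rintro ⟨w, hw, w', hw', rfl⟩
    rw [mem_active_smul_inv_iff ha] at hw
    rw [mem_active_smul_inv_iff hb] at hw'
    exact ⟨Set.mem_image2_of_mem hw.1 hw'.1, by rw [pairing_append_left, hw.2, hw'.2, hab]⟩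

theorem pairing_le_of_active_prodVertices {w : Fin k → ℝ} {w' : Fin l → ℝ}
    (hp : p ∈ polarSet (prodVertices B B')) (hw : w ∈ B) (hw' : w' ∈ B')
    (hww' : pairing w (splitL p) + pairing w' (splitR p) = 1) :
    (∀ v ∈ B, pairing v (splitL p) ≤ pairing w (splitL p)) ∧
      ∀ v ∈ B', pairing v (splitR p) ≤ pairing w' (splitR p) := by
  constructor <;> intro v hv
  · have := pairing_le_one_of_mem_polarSet hp (Set.mem_image2_of_mem hv hw')
    rw [pairing_append_left] at this
    linarith
  · have := pairing_le_one_of_mem_polarSet hp (Set.mem_image2_of_mem hw hv)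
    rw [pairing_append_left] at this
    linarith

theorem pairing_pos_of_active_prodVertices (h : IsDualPair B A) (h' : IsDualPair B' A')
    {w : Fin k → ℝ} {w' : Fin l → ℝ} (hp : p ∈ polarSet (prodVertices B B'))
    (hsub : (active (prodVertices B B') p).Subsingleton) (hw : w ∈ B) (hw' : w' ∈ B')
    (hww' : pairing w (splitL p) + pairing w' (splitR p) = 1) :
    0 < pairing w (splitL p) ∧ 0 < pairing w' (splitR p) := by
  have hactive : Fin.append w w' ∈ active (prodVertices B B') p :=
    ⟨Set.mem_image2_of_mem hw hw', by rwa [pairing_append_left]⟩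
  constructor <;> by_contra! hneg
  · have hmem := Set.mem_image2_of_mem (f := Fin.append) (h.neg_mem_left w hw) hw'
    have hle := pairing_le_one_of_mem_polarSet hp hmem
    have hflip := hsub ⟨hmem, hle.antisymm (by
      rw [pairing_append_left, pairing_neg_left]; linarith)⟩ hactive
    exact h.ne_zero hw (self_eq_neg.1 (append_injective2 hflip).1.symm)
  · have hmem := Set.mem_image2_of_mem (f := Fin.append) hw (h'.neg_mem_left w' hw')
    have hle := pairing_le_one_of_mem_polarSet hp hmem
    have hflip := hsub ⟨hmem, hle.antisymm (by
      rw [pairing_append_left, pairing_neg_left]; linarith)⟩ hactive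
    exact h'.ne_zero hw' (self_eq_neg.1 (append_injective2 hflip).2.symm)

theorem not_nonempty_and_nonempty_of_subsingleton_prodNormals (h : IsDualPair A B) (hSA : S ⊆ A)
    (hsub : (prodNormals S S').Subsingleton) : ¬(S.Nonempty ∧ S'.Nonempty) := by
  rintro ⟨⟨u, hu⟩, ⟨u', hu'⟩⟩
  exact h.ne_zero (hSA hu) (append_injective2
    (hsub (append_zero_mem_prodNormals hu S') (zero_append_mem_prodNormals S hu'))).1

/-- The state `(q, p)` of the product of two polytopes splits into states of the factors, the norms
of the two parts of the momentum being `a` and `b`. -/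
structure IsSplitState (A B : Set (Fin k → ℝ)) (A' B' : Set (Fin l → ℝ)) (a b : ℝ)
    (q p : Fin (k + l) → ℝ) : Prop where
  left_pos : 0 < a
  right_pos : 0 < b
  add_eq_one : a + b = 1
  left : IsState A B (splitL q) (a⁻¹ • splitL p)
  right : IsState A' B' (splitR q) (b⁻¹ • splitR p)

namespace IsState

variable (hs : IsState (prodNormals A A') (prodVertices B B') q p)
include hs

theorem not_nonempty_and_nonempty (h : IsDualPair A B) :
    ¬((active A (splitL q)).Nonempty ∧ (active A' (splitR q)).Nonempty) :=
  not_nonempty_and_nonempty_of_subsingleton_prodNormals h (Set.sep_subset _ _)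
    (active_prodNormals A A' q ▸ hs.coord_subsingleton)

theorem left_coord : splitL q ∈ polarSet A ∧ (active A (splitL q)).Subsingleton :=
  ⟨(polarSet_prodNormals A A' ▸ hs.coord_mem).1,
    subsingleton_left_of_prodNormals (active_prodNormals A A' q ▸ hs.coord_subsingleton)⟩

theorem right_coord : splitR q ∈ polarSet A' ∧ (active A' (splitR q)).Subsingleton :=
  ⟨(polarSet_prodNormals A A' ▸ hs.coord_mem).2,
    subsingleton_right_of_prodNormals (active_prodNormals A A' q ▸ hs.coord_subsingleton)⟩

theorem isSplitState_of_nonempty (ha : 0 < a) (hb : 0 < b) (hab : a + b = 1)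
    (hL : a⁻¹ • splitL p ∈ polarSet B) (hR : b⁻¹ • splitR p ∈ polarSet B')
    (hw : (active B (a⁻¹ • splitL p)).Nonempty) (hw' : (active B' (b⁻¹ • splitR p)).Nonempty) :
    IsSplitState A B A' B' a b q p := by
  have hpsub := hs.mom_subsingleton
  rw [active_prodVertices ha hb hab hL hR] at hpsub
  exact ⟨ha, hb, hab,
    ⟨hs.left_coord.1, hL, hs.left_coord.2, subsingleton_left_of_prodVertices hpsub hw', Or.inr hw⟩,
    ⟨hs.right_coord.1, hR, hs.right_coord.2, subsingleton_right_of_prodVertices hpsub hw,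
      Or.inr hw'⟩⟩

theorem exists_isSplitState (h : IsDualPair A B) (h' : IsDualPair A' B')
    (hne : (active (prodVertices B B') p).Nonempty) : ∃ a b, IsSplitState A B A' B' a b q p := by
  obtain ⟨_, ⟨w, hw, w', hw', rfl⟩, hww'⟩ := hne
  rw [pairing_append_left] at hww'
  obtain ⟨ha, hb⟩ :=
    pairing_pos_of_active_prodVertices h.swap h'.swap hs.mom_mem hs.mom_subsingleton hw hw' hww'
  obtain ⟨hL, hR⟩ := pairing_le_of_active_prodVertices hs.mom_mem hw hw' hww'
  exact ⟨_, _, hs.isSplitState_of_nonempty ha hb hww' ((smul_inv_mem_polarSet_iff ha).2 hL)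
    ((smul_inv_mem_polarSet_iff hb).2 hR) ⟨w, (mem_active_smul_inv_iff ha).2 ⟨hw, rfl⟩⟩
    ⟨w', (mem_active_smul_inv_iff hb).2 ⟨hw', rfl⟩⟩⟩

/-- Since the left part of `q` lies on a facet, the right part does not, and therefore the right
part of `p` does. -/
theorem isSplitState_of_right (h : IsDualPair A B) (ha : 0 < a) (hb : 0 < b) (hab : a + b = 1)
    (hR : IsState A' B' (splitR q) (b⁻¹ • splitR p)) (hu : (active A (splitL q)).Nonempty) :
    IsSplitState A B A' B' a b q p := by
  obtain ⟨w', hw'⟩ := hR.nonempty.resolve_left fun hu' => hs.not_nonempty_and_nonempty h ⟨hu, hu'⟩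
  obtain ⟨hw'B, hw'p⟩ := (mem_active_smul_inv_iff hb).1 hw'
  have hL : a⁻¹ • splitL p ∈ polarSet B := (smul_inv_mem_polarSet_iff ha).2 fun w hw => by
    have := pairing_le_one_of_mem_polarSet hs.mom_mem (Set.mem_image2_of_mem hw hw'B)
    rw [pairing_append_left] at this
    linarith
  have hpsub := hs.mom_subsingleton
  rw [active_prodVertices ha hb hab hL hR.mom_mem] at hpsub
  exact ⟨ha, hb, hab, ⟨hs.left_coord.1, hL, hs.left_coord.2,
    subsingleton_left_of_prodVertices hpsub ⟨w', hw'⟩, Or.inl hu⟩, hR⟩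

theorem isSplitState_of_left (h : IsDualPair A B) (ha : 0 < a) (hb : 0 < b) (hab : a + b = 1)
    (hL : IsState A B (splitL q) (a⁻¹ • splitL p)) (hu' : (active A' (splitR q)).Nonempty) :
    IsSplitState A B A' B' a b q p := by
  obtain ⟨w, hw⟩ := hL.nonempty.resolve_left fun hu => hs.not_nonempty_and_nonempty h ⟨hu, hu'⟩
  obtain ⟨hwB, hwp⟩ := (mem_active_smul_inv_iff ha).1 hw
  have hR : b⁻¹ • splitR p ∈ polarSet B' := (smul_inv_mem_polarSet_iff hb).2 fun w' hw' => by
    have := pairing_le_one_of_mem_polarSet hs.mom_mem (Set.mem_image2_of_mem hwB hw')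
    rw [pairing_append_left] at this
    linarith
  have hpsub := hs.mom_subsingleton
  rw [active_prodVertices ha hb hab hL.mom_mem hR] at hpsub
  exact ⟨ha, hb, hab, hL, ⟨hs.right_coord.1, hR, hs.right_coord.2,
    subsingleton_right_of_prodVertices hpsub ⟨w, hw⟩, Or.inl hu'⟩⟩

end IsState

namespace IsSplitState

variable {u w : Fin (k + l) → ℝ} {c : ℝ}

theorem add_smul_momentum (hS : IsSplitState A B A' B' a b q p) (h : IsDualPair A B)
    (hu : u ∈ active (prodNormals A A') q)
    (hst : IsState (prodNormals A A') (prodVertices B B') q (p + c • u)) :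
    IsSplitState A B A' B' a b q (p + c • u) := by
  rw [active_prodNormals] at hu
  obtain ⟨u, hu, rfl⟩ | ⟨u, hu, rfl⟩ := hu
  · exact hst.isSplitState_of_right h hS.left_pos hS.right_pos hS.add_eq_one
      (by simpa using hS.right) ⟨u, hu⟩
  · exact hst.isSplitState_of_left h hS.left_pos hS.right_pos hS.add_eq_one
      (by simpa using hS.left) ⟨u, hu⟩

theorem active_prodVertices (hS : IsSplitState A B A' B' a b q p) :
    active (prodVertices B B') p =
      prodVertices (active B (a⁻¹ • splitL p)) (active B' (b⁻¹ • splitR p)) :=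
  Billiard.active_prodVertices hS.left_pos hS.right_pos hS.add_eq_one hS.left.mom_mem
    hS.right.mom_mem

theorem add_smul_coord (hS : IsSplitState A B A' B' a b q p)
    (hw : w ∈ active (prodVertices B B') p)
    (hst : IsState (prodNormals A A') (prodVertices B B') (q + c • w) p) :
    IsSplitState A B A' B' a b (q + c • w) p := by
  rw [hS.active_prodVertices] at hw
  obtain ⟨w, hw, w', hw', rfl⟩ := hw
  exact hst.isSplitState_of_nonempty hS.left_pos hS.right_pos hS.add_eq_one hS.left.mom_mem
    hS.right.mom_mem ⟨w, hw⟩ ⟨w', hw'⟩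

end IsSplitState

end ProdState

section ProdFlow

variable {k l n : ℕ} {q p q' p' : Fin (k + l) → ℝ} {a b t s s₁ s₂ : ℝ}

/-- The flow of a product of polytopes from `(q, p)` to `(q', p')` splits into flows of the factors,
moving the two coordinates for the same time and the two momenta for the times `s₁` and `s₂`. -/
structure IsSplitFlow (A B : Set (Fin k → ℝ)) (A' B' : Set (Fin l → ℝ)) (a b : ℝ)
    (q p q' p' : Fin (k + l) → ℝ) (t s s₁ s₂ : ℝ) : Prop where
  target : IsSplitState A B A' B' a b q' p'
  mom_time : s = a * s₁ + b * s₂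
  left : Reaches A B (splitL q) (a⁻¹ • splitL p) (splitL q') (a⁻¹ • splitL p') t s₁
  right : Reaches A' B' (splitR q) (b⁻¹ • splitR p) (splitR q') (b⁻¹ • splitR p') t s₂

/-- From `(q, p)` to `(q', p')` the momentum has moved for the time `s` through the interior of
`polarSet B`, without reaching the boundary. -/
structure IsInteriorMove (A B : Set (Fin n → ℝ)) (q p q' p' : Fin n → ℝ) (t s : ℝ) : Prop where
  coord_eq : q' = q
  coord_time : t = 0
  mom_time_nonneg : 0 ≤ s
  exists_normal : ∃ u ∈ active A q, p' = p - s • u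
  active_left : active B p = ∅
  active_right : active B p' = ∅

variable {A B : Set (Fin k → ℝ)} {A' B' : Set (Fin l → ℝ)} {u w : Fin (k + l) → ℝ} {c : ℝ}

theorem IsSplitState.isSplitFlow (hS : IsSplitState A B A' B' a b q p) :
    IsSplitFlow A B A' B' a b q p q p 0 0 0 0 :=
  ⟨hS, by ring, .refl hS.left, .refl hS.right⟩

theorem IsSplitFlow.source (hF : IsSplitFlow A B A' B' a b q p q' p' t s s₁ s₂) :
    IsSplitState A B A' B' a b q p :=
  ⟨hF.target.left_pos, hF.target.right_pos, hF.target.add_eq_one, hF.left.isState_left,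
    hF.right.isState_left⟩

theorem IsSplitFlow.momentum (hF : IsSplitFlow A B A' B' a b q p q' p' t s s₁ s₂)
    (h : IsDualPair A B) (hu : u ∈ active (prodNormals A A') q') (hc : 0 ≤ c)
    (hst : IsState (prodNormals A A') (prodVertices B B') q' (p' - c • u)) :
    ∃ s₁ s₂, IsSplitFlow A B A' B' a b q p q' (p' - c • u) t (s + c) s₁ s₂ := by
  have ha := hF.target.left_pos
  have hb := hF.target.right_pos
  have hS : IsSplitState A B A' B' a b q' (p' - c • u) := by
    rw [sub_eq_add_neg, ← neg_smul] at hst ⊢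
    exact hF.target.add_smul_momentum h hu hst
  have hmom := hF.mom_time
  rw [active_prodNormals] at hu
  obtain ⟨u, hu, rfl⟩ | ⟨u, hu, rfl⟩ := hu
  · have hL : a⁻¹ • splitL (p' - c • Fin.append u 0) = a⁻¹ • splitL p' - (c / a) • u := by
      rw [splitL_sub, splitL_smul, splitL_append, smul_sub, smul_smul, inv_mul_eq_div]
    have hR : splitR (p' - c • Fin.append u (0 : Fin l → ℝ)) = splitR p' := by simp
    exact ⟨s₁ + c / a, s₂, hS, by rw [hmom]; field_simp; ring,
      hL ▸ hF.left.momentum hu (by positivity) (hL ▸ hS.left), hR ▸ hF.right⟩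
  · have hR : b⁻¹ • splitR (p' - c • Fin.append 0 u) = b⁻¹ • splitR p' - (c / b) • u := by
      rw [splitR_sub, splitR_smul, splitR_append, smul_sub, smul_smul, inv_mul_eq_div]
    have hL : splitL (p' - c • Fin.append (0 : Fin k → ℝ) u) = splitL p' := by simp
    exact ⟨s₁, s₂ + c / b, hS, by rw [hmom]; field_simp; ring,
      hL ▸ hF.left, hR ▸ hF.right.momentum hu (by positivity) (hR ▸ hS.right)⟩

theorem IsSplitFlow.coord (hF : IsSplitFlow A B A' B' a b q p q' p' t s s₁ s₂)
    (hw : w ∈ active (prodVertices B B') p') (hc : 0 ≤ c)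
    (hst : IsState (prodNormals A A') (prodVertices B B') (q' + c • w) p') :
    IsSplitFlow A B A' B' a b q p (q' + c • w) p' (t + c) s s₁ s₂ := by
  have hS := hF.target.add_smul_coord hw hst
  rw [hF.target.active_prodVertices] at hw
  obtain ⟨w, hw, w', hw', rfl⟩ := hw
  have hL := hF.left.coord hw hc (by simpa using hS.left)
  have hR := hF.right.coord hw' hc (by simpa using hS.right)
  exact ⟨hS, hF.mom_time, by simpa using hL, by simpa using hR⟩

theorem Reaches.isInteriorMove_or_isSplitFlow (h : IsDualPair A B) (h' : IsDualPair A' B')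
    (hr : Reaches (prodNormals A A') (prodVertices B B') q p q' p' t s) :
    IsInteriorMove (prodNormals A A') (prodVertices B B') q p q' p' t s ∨
      ∃ a b s₁ s₂, IsSplitFlow A B A' B' a b q p q' p' t s s₁ s₂ := by
  induction hr with
  | refl hst =>
    rcases (active (prodVertices B B') p).eq_empty_or_nonempty with hp | hp
    · obtain ⟨u, hu⟩ := hst.nonempty.resolve_right (Set.not_nonempty_iff_eq_empty.2 hp)
      exact Or.inl ⟨rfl, rfl, le_rfl, ⟨u, hu, by simp⟩, hp, hp⟩
    · obtain ⟨a, b, hS⟩ := hst.exists_isSplitState h h' hp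
      exact Or.inr ⟨a, b, 0, 0, hS.isSplitFlow⟩
  | @momentum q' p' u t s σ hr hu hσ hst ih =>
    rcases ih with ⟨rfl, rfl, hs, ⟨v, hv, rfl⟩, hp, -⟩ | ⟨a, b, s₁, s₂, hF⟩
    · obtain rfl := hst.coord_subsingleton hu hv
      have hp_eq : p - s • u - σ • u = p - (s + σ) • u := by rw [add_smul, sub_sub]
      rw [hp_eq] at hst ⊢
      rcases (active (prodVertices B B') (p - (s + σ) • u)).eq_empty_or_nonempty with hp' | hp'
      · exact Or.inl ⟨rfl, rfl, by positivity, ⟨u, hu, rfl⟩, hp, hp'⟩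
      · obtain ⟨a, b, hS⟩ := hst.exists_isSplitState h h' hp'
        have hback : p - (s + σ) • u + (s + σ) • u = p := sub_add_cancel _ _
        have hS₀ := hS.add_smul_momentum h hu (hback.symm ▸ hr.isState_left)
        rw [hback] at hS₀
        obtain ⟨s₁, s₂, hF⟩ := hS₀.isSplitFlow.momentum h hu (add_nonneg hs hσ) hst
        exact Or.inr ⟨a, b, s₁, s₂, by simpa only [zero_add] using hF⟩
    · obtain ⟨s₁, s₂, hF⟩ := hF.momentum h hu hσ hst
      exact Or.inr ⟨a, b, s₁, s₂, hF⟩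
  | coord _ hw hτ hst ih =>
    rcases ih with hI | ⟨a, b, s₁, s₂, hF⟩
    · exact absurd hw (hI.active_right ▸ Set.notMem_empty _)
    · exact Or.inr ⟨a, b, s₁, s₂, hF.coord hw hτ hst⟩

theorem IsInteriorMove.isAntipodalFlow {A B : Set (Fin n → ℝ)} {q p q' p' : Fin n → ℝ}
    (h : IsDualPair A B) (hI : IsInteriorMove A B q p q' p' t s) (hp : p ∈ polarSet B)
    (hp' : p' ∈ polarSet B) : IsAntipodalFlow A B q p q' p' t s := by
  obtain ⟨rfl, rfl, -, ⟨u, hu, rfl⟩, hempty, -⟩ := hI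
  have hs : s < 2 := by
    obtain ⟨w, hw, hwu⟩ := h.active_right_nonempty u hu.1
    have hwp : pairing w p < 1 := (pairing_le_one_of_mem_polarSet hp hw).lt_of_ne fun hwp =>
      Set.notMem_empty w (hempty ▸ ⟨hw, hwp⟩)
    have hwp' := h.swap.neg_one_le_pairing hp' hw
    rw [pairing_sub_right, pairing_smul_right, hwu] at hwp'
    linarith
  exact ⟨⟨fun _ => by norm_num, by norm_num, by norm_num, fun v _ _ => by simp⟩,
    ⟨fun _ => hs.le, fun h => absurd h hs.ne, fun h => absurd h hs.ne,
      fun w hw _ => absurd hw (hempty ▸ Set.notMem_empty w)⟩⟩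

/-- The flows of the two factors stay in step: were `s₁ > 2` and `s₂ < 2`, then `t = 2`, and both
parts of the coordinate would have started on a facet. -/
theorem mom_time_le_two_of_lt_two {n₁ n₂ : ℕ} {C D : Set (Fin n₁ → ℝ)} {C' D' : Set (Fin n₂ → ℝ)}
    {q p q' p' : Fin n₁ → ℝ} {x y x' y' : Fin n₂ → ℝ}
    (hL : IsAntipodalFlow C D q p q' p' t s₁) (hR : IsAntipodalFlow C' D' x y x' y' t s₂)
    (hnot : ¬((active C q).Nonempty ∧ (active C' x).Nonempty)) (hs₂ : s₂ < 2) : s₁ ≤ 2 := by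
  by_contra! hs₁
  have ht : t = 2 := (hR.coord.le hs₂).antisymm (not_lt.1 fun ht => (hL.mom.le ht).not_gt hs₁)
  exact hnot ⟨(hL.coord.eq_or_nonempty ht).resolve_left hs₁.ne',
    (hR.coord.eq_or_nonempty ht).resolve_left hs₂.ne⟩

theorem IsHalfPeriodic.prodNormals {x x' : Fin (k + l) → ℝ} (ha : 0 < a) (hb : 0 < b)
    (hab : a + b = 1) (hs : s = a * s₁ + b * s₂)
    (hL : IsHalfPeriodic A (splitL x) (splitL x') t s₁)
    (hR : IsHalfPeriodic A' (splitR x) (splitR x') t s₂) :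
    IsHalfPeriodic (prodNormals A A') x x' t s where
  le hs2 := by
    by_cases hs₁ : s₁ < 2
    · exact hL.le hs₁
    · exact hR.le (by nlinarith)
  eq_neg ht := ext_split (by simpa using hL.eq_neg ht) (by simpa using hR.eq_neg ht)
  eq_or_nonempty ht := by
    rw [active_prodNormals]
    rcases hL.eq_or_nonempty ht with hs₁ | ⟨u, hu⟩
    · rcases hR.eq_or_nonempty ht with hs₂ | ⟨u, hu⟩
      · exact Or.inl (by rw [hs, hs₁, hs₂]; linarith)
      · exact Or.inr ⟨_, zero_append_mem_prodNormals _ hu⟩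
    · exact Or.inr ⟨_, append_zero_mem_prodNormals hu _⟩
  pairing_sub := by
    rw [active_prodNormals, forall_mem_prodNormals]
    exact ⟨fun u hu ht => by simpa using hL.pairing_sub u hu ht,
      fun u hu ht => by simpa using hR.pairing_sub u hu ht⟩

theorem IsHalfPeriodic.prodVertices {B : Set (Fin k → ℝ)} {B' : Set (Fin l → ℝ)}
    {x x' : Fin (k + l) → ℝ} (ha : 0 < a) (hb : 0 < b) (hab : a + b = 1)
    (hs : s = a * s₁ + b * s₂)
    (hactive : active (prodVertices B B') x =
      prodVertices (active B (a⁻¹ • splitL x)) (active B' (b⁻¹ • splitR x)))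
    (hL : IsHalfPeriodic B (a⁻¹ • splitL x) (a⁻¹ • splitL x') s₁ t)
    (hR : IsHalfPeriodic B' (b⁻¹ • splitR x) (b⁻¹ • splitR x') s₂ t)
    (hL_le : s₂ < 2 → s₁ ≤ 2) (hR_le : s₁ < 2 → s₂ ≤ 2) :
    IsHalfPeriodic (prodVertices B B') x x' s t := by
  have le_two (hs2 : s ≤ 2) : s₁ ≤ 2 ∧ s₂ ≤ 2 := by
    constructor <;> by_contra! hgt
    · exact (hL_le (by nlinarith)).not_gt hgt
    · exact (hR_le (by nlinarith)).not_gt hgt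
  have eq_two (hs2 : s = 2) : s₁ = 2 ∧ s₂ = 2 := by
    obtain ⟨h₁, h₂⟩ := le_two hs2.le
    exact ⟨h₁.antisymm (by nlinarith), h₂.antisymm (by nlinarith)⟩
  refine ⟨fun ht => ?_, fun hs2 => ?_, fun hs2 => ?_, fun w hw hs2 => ?_⟩
  · have h₁ := hL.le ht
    have h₂ := hR.le ht
    nlinarith
  · have hxL := hL.eq_neg (eq_two hs2).1
    have hxR := hR.eq_neg (eq_two hs2).2
    rw [← smul_neg, smul_right_inj (inv_ne_zero ha.ne')] at hxL
    rw [← smul_neg, smul_right_inj (inv_ne_zero hb.ne')] at hxR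
    exact ext_split hxL hxR
  · rw [hactive]
    rcases hL.eq_or_nonempty (eq_two hs2).1 with ht | hw
    · exact Or.inl ht
    · exact (hR.eq_or_nonempty (eq_two hs2).2).imp_right fun hw' => hw.image2 hw'
  · rw [hactive] at hw
    obtain ⟨w, hw, w', hw', rfl⟩ := hw
    have h₁ := hL.pairing_sub w hw (le_two hs2).1
    have h₂ := hR.pairing_sub w' hw' (le_two hs2).2
    rw [← smul_sub, pairing_smul_right, inv_mul_eq_iff_eq_mul₀ ha.ne'] at h₁
    rw [← smul_sub, pairing_smul_right, inv_mul_eq_iff_eq_mul₀ hb.ne'] at h₂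
    rw [pairing_append_left, splitL_sub, splitR_sub, h₁, h₂, hs]

theorem IsSplitFlow.isAntipodalFlow (h : IsDualPair A B)
    (hF : IsSplitFlow A B A' B' a b q p q' p' t s s₁ s₂)
    (hst : IsState (prodNormals A A') (prodVertices B B') q p)
    (hL : IsAntipodalFlow A B (splitL q) (a⁻¹ • splitL p) (splitL q') (a⁻¹ • splitL p') t s₁)
    (hR : IsAntipodalFlow A' B' (splitR q) (b⁻¹ • splitR p) (splitR q') (b⁻¹ • splitR p') t s₂) :
    IsAntipodalFlow (prodNormals A A') (prodVertices B B') q p q' p' t s where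
  coord := .prodNormals hF.target.left_pos hF.target.right_pos hF.target.add_eq_one hF.mom_time
    hL.coord hR.coord
  mom := .prodVertices hF.target.left_pos hF.target.right_pos hF.target.add_eq_one hF.mom_time
    hF.source.active_prodVertices hL.mom hR.mom
    (mom_time_le_two_of_lt_two hL hR (hst.not_nonempty_and_nonempty h))
    (mom_time_le_two_of_lt_two hR hL (mt And.symm (hst.not_nonempty_and_nonempty h)))

end ProdFlow

theorem IsHannerPair.isAntipodalFlow {n : ℕ} {A B : Set (Fin n → ℝ)} (hAB : IsHannerPair A B)
    {q p q' p' : Fin n → ℝ} {t s : ℝ} (hr : Reaches A B q p q' p' t s) :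
    IsAntipodalFlow A B q p q' p' t s := by
  induction hAB generalizing t s with
  | segment => exact hr.isAntipodalFlow_segment
  | prod h h' ih ih' =>
    rcases hr.isInteriorMove_or_isSplitFlow h.isDualPair h'.isDualPair with
      hI | ⟨a, b, s₁, s₂, hF⟩
    · exact hI.isAntipodalFlow (h.prod h').isDualPair hr.isState_left.mom_mem
        hr.isState_right.mom_mem
    · exact hF.isAntipodalFlow h.isDualPair hr.isState_left (ih hF.left) (ih' hF.right)
  | swap h ih =>
    exact .of_swap h.isDualPair.neg_mem_right (ih (hr.swap h.isDualPair.swap))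

section Chord

variable {n : ℕ} {A : Set (Fin n → ℝ)} {x d : Fin n → ℝ} {c m : ℝ}

theorem active_eq_empty_of_chord (hx : x ∈ polarSet A) (hy : x + m • d ∈ polarSet A)
    (hd : ∀ v ∈ active A x, pairing v d < 0) (hc : 0 < c) (hcm : c < m) :
    active A (x + c • d) = ∅ := by
  refine Set.eq_empty_of_forall_notMem fun v ⟨hv, hvc⟩ => ?_
  have hvx := pairing_le_one_of_mem_polarSet hx hv
  have hvy := pairing_le_one_of_mem_polarSet hy hv
  rw [pairing_add_right, pairing_smul_right] at hvc hvy
  rcases hvx.lt_or_eq with hlt | heq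
  · have : 0 < pairing v d := by nlinarith
    nlinarith
  · have hvd := hd v ⟨hv, heq⟩
    nlinarith

theorem active_subsingleton_of_chord (hx : x ∈ polarSet A) (hy : x + m • d ∈ polarSet A)
    (hd : ∀ v ∈ active A x, pairing v d < 0) (hxs : (active A x).Subsingleton)
    (hys : (active A (x + m • d)).Subsingleton) (hc : 0 ≤ c) (hcm : c ≤ m) :
    (active A (x + c • d)).Subsingleton := by
  rcases hc.eq_or_lt with rfl | hc
  · rwa [zero_smul, add_zero]
  rcases hcm.eq_or_lt with rfl | hcm
  · exact hys
  · rw [active_eq_empty_of_chord hx hy hd hc hcm]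
    exact Set.subsingleton_empty

theorem mem_polarSet_of_chord (hx : x ∈ polarSet A) (hy : x + m • d ∈ polarSet A) (hc : 0 ≤ c)
    (hcm : c ≤ m) : x + c • d ∈ polarSet A := by
  refine mem_polarSet_iff.2 fun v hv => ?_
  have hvx := pairing_le_one_of_mem_polarSet hx hv
  have hvy := pairing_le_one_of_mem_polarSet hy hv
  rw [pairing_add_right, pairing_smul_right] at hvy ⊢
  rcases le_or_gt (pairing v d) 0 with hvd | hvd <;> nlinarith

end Chord

/-- A bounce of the billiard: a coordinate `q` and a momentum `p`, together with the normals `u` and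
`w` of the facets on which they lie. -/
structure Bounce (n : ℕ) where
  q : Fin n → ℝ
  p : Fin n → ℝ
  u : Fin n → ℝ
  w : Fin n → ℝ

namespace Bounce

variable {n : ℕ} {A B : Set (Fin n → ℝ)} {x y : Bounce n} {q p : Fin n → ℝ} {lam mu c t s : ℝ}

/-- Both points of the bounce lie in the relative interiors of facets, with the recorded normals,
and the momentum is about to move inwards. -/
structure IsRegular (A B : Set (Fin n → ℝ)) (x : Bounce n) : Prop where
  q_mem : x.q ∈ polarSet A
  p_mem : x.p ∈ polarSet B
  active_q : active A x.q = {x.u}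
  active_p : active B x.p = {x.w}
  pos : 0 < pairing x.w x.u

/-- The bounce `y` follows `x` by the billiard rules, after the momentum has moved for the time
`lam` and the coordinate for the time `mu`. -/
structure IsNext (lam mu : ℝ) (x y : Bounce n) : Prop where
  lam_pos : 0 < lam
  mu_pos : 0 < mu
  neg : pairing x.u y.w < 0
  reflection : y.p = x.p - lam • x.u
  motion : y.q = x.q + mu • y.w

namespace IsRegular

theorem u_mem (hx : x.IsRegular A B) : x.u ∈ active A x.q := hx.active_q ▸ Set.mem_singleton _

theorem w_mem (hx : x.IsRegular A B) : x.w ∈ active B x.p := hx.active_p ▸ Set.mem_singleton _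

theorem eq_u (hx : x.IsRegular A B) {v : Fin n → ℝ} (hv : v ∈ active A x.q) : v = x.u :=
  Set.eq_of_mem_singleton (hx.active_q ▸ hv)

theorem eq_w (hx : x.IsRegular A B) {v : Fin n → ℝ} (hv : v ∈ active B x.p) : v = x.w :=
  Set.eq_of_mem_singleton (hx.active_p ▸ hv)

theorem coord_subsingleton (hx : x.IsRegular A B) : (active A x.q).Subsingleton :=
  hx.active_q ▸ Set.subsingleton_singleton

theorem mom_subsingleton (hx : x.IsRegular A B) : (active B x.p).Subsingleton :=
  hx.active_p ▸ Set.subsingleton_singleton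

theorem isState (hx : x.IsRegular A B) : IsState A B x.q x.p :=
  ⟨hx.q_mem, hx.p_mem, hx.coord_subsingleton, hx.mom_subsingleton, Or.inl ⟨_, hx.u_mem⟩⟩

end IsRegular

namespace IsNext

variable (hxy : IsNext lam mu x y) (hx : x.IsRegular A B) (hy : y.IsRegular A B)
include hxy hx hy

theorem isState_momentum (hc : 0 ≤ c) (hcl : c ≤ lam) : IsState A B x.q (x.p - c • x.u) := by
  have hend : x.p + lam • -x.u = y.p := by rw [hxy.reflection, smul_neg, sub_eq_add_neg]
  have hmem : x.p + lam • -x.u ∈ polarSet B := hend ▸ hy.p_mem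
  have hneg : ∀ v ∈ active B x.p, pairing v (-x.u) < 0 := fun v hv => by
    rw [hx.eq_w hv, pairing_neg_right]
    exact neg_neg_of_pos hx.pos
  rw [sub_eq_add_neg, ← smul_neg]
  exact ⟨hx.q_mem, mem_polarSet_of_chord hx.p_mem hmem hc hcl, hx.coord_subsingleton,
    active_subsingleton_of_chord hx.p_mem hmem hneg hx.mom_subsingleton
      (hend ▸ hy.mom_subsingleton) hc hcl, Or.inl ⟨_, hx.u_mem⟩⟩

theorem active_coord_eq_empty (hc : 0 < c) (hcm : c < mu) : active A (x.q + c • y.w) = ∅ :=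
  active_eq_empty_of_chord hx.q_mem (hxy.motion ▸ hy.q_mem) (fun _ hv => hx.eq_u hv ▸ hxy.neg) hc
    hcm

theorem isState_coord (hc : 0 ≤ c) (hcm : c ≤ mu) : IsState A B (x.q + c • y.w) y.p := by
  have hmem : x.q + mu • y.w ∈ polarSet A := hxy.motion ▸ hy.q_mem
  exact ⟨mem_polarSet_of_chord hx.q_mem hmem hc hcm, hy.p_mem,
    active_subsingleton_of_chord hx.q_mem hmem (fun _ hv => hx.eq_u hv ▸ hxy.neg)
      hx.coord_subsingleton (hxy.motion ▸ hy.coord_subsingleton) hc hcm,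
    hy.mom_subsingleton, Or.inr ⟨_, hy.w_mem⟩⟩

theorem reaches_momentum (hr : Reaches A B q p x.q x.p t s) (hc : 0 ≤ c) (hcl : c ≤ lam) :
    Reaches A B q p x.q (x.p - c • x.u) t (s + c) :=
  hr.momentum hx.u_mem hc (hxy.isState_momentum hx hy hc hcl)

theorem reaches_coord (hr : Reaches A B q p x.q x.p t s) (hc : 0 ≤ c) (hcm : c ≤ mu) :
    Reaches A B q p (x.q + c • y.w) y.p (t + c) (s + lam) := by
  have hmom := hxy.reaches_momentum hx hy hr hxy.lam_pos.le le_rfl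
  rw [← hxy.reflection] at hmom
  exact hmom.coord hy.w_mem hc (hxy.isState_coord hx hy hc hcm)

end IsNext

end Bounce

/-- An infinite billiard orbit, each bounce being regular. -/
structure IsOrbit {n : ℕ} (A B : Set (Fin n → ℝ)) (x : ℕ → Bounce n) (lam mu : ℕ → ℝ) : Prop where
  isRegular : ∀ i, (x i).IsRegular A B
  isNext : ∀ i, Bounce.IsNext (lam i) (mu i) (x i) (x (i + 1))

namespace IsOrbit

variable {n : ℕ} {A B : Set (Fin n → ℝ)} {x : ℕ → Bounce n} {lam mu : ℕ → ℝ}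

theorem shift (ho : IsOrbit A B x lam mu) (d : ℕ) :
    IsOrbit A B (fun i => x (d + i)) (fun i => lam (d + i)) (fun i => mu (d + i)) :=
  ⟨fun i => ho.isRegular (d + i), fun i => ho.isNext (d + i)⟩

theorem sum_mu_strictMono (ho : IsOrbit A B x lam mu) :
    StrictMono fun j => ∑ i ∈ Finset.range j, mu i :=
  strictMono_nat_of_lt_succ fun j => by
    rw [Finset.sum_range_succ]
    exact lt_add_of_pos_right _ (ho.isNext j).mu_pos

theorem reaches (ho : IsOrbit A B x lam mu) (j : ℕ) :
    Reaches A B (x 0).q (x 0).p (x j).q (x j).p (∑ i ∈ Finset.range j, mu i)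
      (∑ i ∈ Finset.range j, lam i) := by
  induction j with
  | zero => simpa using Reaches.refl (ho.isRegular 0).isState
  | succ j ih =>
    have hj := ho.isNext j
    rw [Finset.sum_range_succ, Finset.sum_range_succ, hj.motion]
    exact hj.reaches_coord (ho.isRegular j) (ho.isRegular (j + 1)) ih hj.mu_pos.le le_rfl

theorem isAntipodalFlow (ho : IsOrbit A B x lam mu) (hAB : IsHannerPair A B) (j : ℕ) :
    IsAntipodalFlow A B (x 0).q (x 0).p (x j).q (x j).p (∑ i ∈ Finset.range j, mu i)
      (∑ i ∈ Finset.range j, lam i) :=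
  hAB.isAntipodalFlow (ho.reaches j)

theorem pairing_lt_one (ho : IsOrbit A B x lam mu) (hAB : IsHannerPair A B) {j : ℕ} (hj : 0 < j)
    (ht : ∑ i ∈ Finset.range j, mu i ≤ 2) : pairing (x 0).u (x j).q < 1 := by
  have hu := (ho.isRegular 0).u_mem
  have hdrop := (ho.isAntipodalFlow hAB j).coord.pairing_sub _ hu ht
  have hpos := ho.sum_mu_strictMono hj
  simp only [Finset.sum_range_zero] at hpos
  rw [pairing_sub_right, hu.2] at hdrop
  linarith

/-- Otherwise no facet normal would ever recur. -/
theorem exists_two_le_sum_mu (ho : IsOrbit A B x lam mu) (hAB : IsHannerPair A B) :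
    ∃ j, 2 ≤ ∑ i ∈ Finset.range j, mu i := by
  by_contra! hlt
  have hinj (i d : ℕ) : (x i).u ≠ (x (i + (d + 1))).u := fun hu => by
    have hle := (hlt (i + (d + 1))).le
    rw [Finset.sum_range_add] at hle
    have hnonneg : 0 ≤ ∑ k ∈ Finset.range i, mu k :=
      Finset.sum_nonneg fun k _ => (ho.isNext k).mu_pos.le
    have hdrop := (ho.shift i).pairing_lt_one hAB d.succ_pos (by linarith)
    exact hdrop.ne (hu ▸ (ho.isRegular (i + (d + 1))).u_mem.2)
  have : Finite A := hAB.isDualPair.finite_left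
  obtain ⟨i, j, hij, hu⟩ :=
    Finite.exists_ne_map_eq_of_infinite fun i => (⟨_, (ho.isRegular i).u_mem.1⟩ : A)
  rw [Subtype.mk.injEq] at hu
  rcases hij.lt_or_gt with hij | hij
  · obtain ⟨d, rfl⟩ := Nat.exists_eq_add_of_lt hij
    exact hinj i d hu
  · obtain ⟨d, rfl⟩ := Nat.exists_eq_add_of_lt hij
    exact hinj j d hu.symm

theorem exists_sum_mu_eq_two (ho : IsOrbit A B x lam mu) (hAB : IsHannerPair A B) :
    ∃ j, ∑ i ∈ Finset.range (j + 1), mu i = 2 := by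
  classical
  have hex := ho.exists_two_le_sum_mu hAB
  obtain ⟨j, hj⟩ : ∃ j, Nat.find hex = j + 1 := Nat.exists_eq_succ_of_ne_zero fun h0 => by
    have := Nat.find_spec hex
    rw [h0, Finset.sum_range_zero] at this
    linarith
  have hlt : ∑ i ∈ Finset.range j, mu i < 2 := not_le.1 (Nat.find_min hex (by lia))
  have hle : 2 ≤ ∑ i ∈ Finset.range (j + 1), mu i := hj ▸ Nat.find_spec hex
  rw [Finset.sum_range_succ] at hle
  refine ⟨j, (Finset.sum_range_succ _ _).trans (hle.antisymm' (not_lt.1 fun hgt => ?_))⟩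
  have hnext := ho.isNext j
  have hreg := ho.isRegular j
  have hreg' := ho.isRegular (j + 1)
  have hflow := hAB.isAntipodalFlow <| hnext.reaches_coord hreg hreg' (ho.reaches j)
    (c := 2 - ∑ i ∈ Finset.range j, mu i) (by linarith) (by linarith)
  have hactive := hnext.active_coord_eq_empty hreg hreg'
    (c := 2 - ∑ i ∈ Finset.range j, mu i) (by linarith) (by linarith)
  rw [hflow.coord.eq_neg (by ring), active_neg hAB.isDualPair.neg_mem_left,
    (ho.isRegular 0).active_q, Set.neg_eq_empty] at hactive
  exact Set.singleton_ne_empty _ hactive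

/-- When the coordinate clock reads `2`, the momentum clock reads at most `2`. Letting the momentum
run for the missing time `c` leads to `-p₀`, but `w₀` forbids `c > 0`. -/
theorem mom_eq_neg_of_sum_mu_eq_two (ho : IsOrbit A B x lam mu) (hAB : IsHannerPair A B) {j : ℕ}
    (hj : ∑ i ∈ Finset.range (j + 1), mu i = 2) : (x (j + 1)).p = -(x 0).p := by
  have hd := hAB.isDualPair
  have h₀ := ho.isRegular 0
  have hreg := ho.isRegular (j + 1)
  have hq := (ho.isAntipodalFlow hAB (j + 1)).coord.eq_neg hj
  have hs : ∑ i ∈ Finset.range (j + 1), lam i ≤ 2 := by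
    have hmom := (ho.isNext j).reaches_momentum (ho.isRegular j) hreg (ho.reaches j)
      (ho.isNext j).lam_pos.le le_rfl
    rw [Finset.sum_range_succ]
    exact (hAB.isAntipodalFlow hmom).mom.le (hj ▸ ho.sum_mu_strictMono j.lt_succ_self)
  have hs' : 2 ≤ ∑ i ∈ Finset.range (j + 1), lam i + lam (j + 1) := by
    rw [← Finset.sum_range_succ]
    exact not_lt.1 fun hlt => ((ho.isAntipodalFlow hAB (j + 2)).coord.le hlt).not_gt
      (hj ▸ ho.sum_mu_strictMono (j + 1).lt_succ_self)
  set c := 2 - ∑ i ∈ Finset.range (j + 1), lam i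
  have hp : (x (j + 1)).p - c • (x (j + 1)).u = -(x 0).p :=
    (hAB.isAntipodalFlow <| (ho.isNext (j + 1)).reaches_momentum hreg (ho.isRegular (j + 2))
      (ho.reaches (j + 1)) (by linarith) (by linarith)).mom.eq_neg (by ring)
  have hu : -(x 0).u = (x (j + 1)).u :=
    hreg.eq_u (hq ▸ neg_mem_active_neg hd.neg_mem_left h₀.u_mem)
  have hc : c = 0 := by
    have hw := congrArg (pairing (x 0).w) hp
    have hge := hd.swap.neg_one_le_pairing hreg.p_mem h₀.w_mem.1
    rw [← hu, pairing_sub_right, pairing_smul_right, pairing_neg_right, pairing_neg_right,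
      h₀.w_mem.2] at hw
    exact le_antisymm (by nlinarith [h₀.pos]) (by linarith)
  rwa [hc, zero_smul, sub_zero] at hp

theorem exists_antipodal (ho : IsOrbit A B x lam mu) (hAB : IsHannerPair A B) :
    ∃ j, 0 < j ∧ ∑ i ∈ Finset.range j, mu i = 2 ∧ (x j).q = -(x 0).q ∧ (x j).p = -(x 0).p :=
  let ⟨j, hj⟩ := ho.exists_sum_mu_eq_two hAB
  ⟨j + 1, j.succ_pos, hj, (ho.isAntipodalFlow hAB (j + 1)).coord.eq_neg hj,
    ho.mom_eq_neg_of_sum_mu_eq_two hAB hj⟩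

theorem exists_period (ho : IsOrbit A B x lam mu) (hAB : IsHannerPair A B) :
    ∃ m, 0 < m ∧ ∑ i ∈ Finset.range m, mu i = 4 ∧ (x m).q = (x 0).q ∧ (x m).p = (x 0).p ∧
      ∀ d, 0 < d → d < m → (x d).q ≠ (x 0).q := by
  have h₀ := ho.isRegular 0
  obtain ⟨j, hj, hj₂, hq, hp⟩ := ho.exists_antipodal hAB
  obtain ⟨k, -, hk₂, hq', hp'⟩ := (ho.shift j).exists_antipodal hAB
  rw [add_zero, hq, neg_neg] at hq'
  rw [add_zero, hp, neg_neg] at hp'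
  refine ⟨j + k, Nat.add_pos_left hj k, by rw [Finset.sum_range_add, hj₂, hk₂]; norm_num, hq', hp',
    fun d hd hdm hqd => ?_⟩
  rcases le_or_gt d j with hdj | hjd
  · have hlt := ho.pairing_lt_one hAB hd ((ho.sum_mu_strictMono.monotone hdj).trans hj₂.le)
    exact hlt.ne (hqd ▸ h₀.u_mem.2)
  · obtain ⟨e, rfl⟩ := Nat.exists_eq_add_of_le hjd.le
    have hlt : ∑ i ∈ Finset.range e, mu (j + i) < 2 :=
      hk₂ ▸ (ho.shift j).sum_mu_strictMono (Nat.lt_of_add_lt_add_left hdm)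
    have hu : -(x 0).u ∈ active A (x j).q :=
      hq ▸ neg_mem_active_neg hAB.isDualPair.neg_mem_left h₀.u_mem
    have hdrop := ((ho.shift j).isAntipodalFlow hAB e).coord.pairing_sub _ hu hlt.le
    simp only [add_zero, hq, hqd, pairing_sub_right, pairing_neg_left, pairing_neg_right,
      h₀.u_mem.2] at hdrop
    linarith

end IsOrbit

section Boundary

open Filter Topology

variable {n : ℕ} {A B : Set (Fin n → ℝ)} {q u w x z : Fin n → ℝ}

theorem isClosed_polarSet (A : Set (Fin n → ℝ)) : IsClosed (polarSet A) := by
  have hA : polarSet A = ⋂ u ∈ A, {x | pairing u x ≤ 1} := by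
    ext
    simp [mem_polarSet_iff]
  rw [hA]
  exact isClosed_biInter fun u _ => isClosed_le (continuous_pairing u) continuous_const

theorem pairing_lt_one_of_mem_interior (hx : x ∈ interior (polarSet A)) (hu : u ∈ A) :
    pairing u x < 1 := by
  refine (pairing_le_one_of_mem_polarSet (interior_subset hx) hu).lt_of_ne fun hux => ?_
  have hcont : Continuous fun δ : ℝ => x + δ • x := by fun_prop
  have hlim : Tendsto (fun δ : ℝ => x + δ • x) (𝓝[>] 0) (𝓝 x) := by
    simpa using (hcont.tendsto 0).mono_left nhdsWithin_le_nhds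
  obtain ⟨δ, hmem, hδ : 0 < δ⟩ :=
    ((hlim.eventually (mem_interior_iff_mem_nhds.1 hx)).and self_mem_nhdsWithin).exists
  have hle := pairing_le_one_of_mem_polarSet hmem hu
  rw [pairing_add_right, pairing_smul_right, hux] at hle
  linarith

theorem mem_frontier_polarSet (hA : A.Finite) :
    x ∈ frontier (polarSet A) ↔ x ∈ polarSet A ∧ (active A x).Nonempty := by
  rw [(isClosed_polarSet A).frontier_eq]
  refine ⟨fun hx => ⟨hx.1, ?_⟩, fun ⟨hx, u, hu, hux⟩ =>
    ⟨hx, fun hint => (pairing_lt_one_of_mem_interior hint hu).ne hux⟩⟩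
  by_contra hne
  refine hx.2 (mem_interior_iff_mem_nhds.2 ?_)
  have hlt : ∀ᶠ y in 𝓝 x, ∀ u ∈ A, pairing u y < 1 := (eventually_all_finite hA).2 fun u hu =>
    ((continuous_pairing u).tendsto x).eventually_lt_const <|
      (pairing_le_one_of_mem_polarSet hx.1 hu).lt_of_ne fun hux => hne ⟨u, hu, hux⟩
  exact hlt.mono fun y hy => mem_polarSet_iff.2 fun u hu => (hy u hu).le

theorem exists_add_smul_mem_polarSet (hA : A.Finite) (hq : q ∈ polarSet A)
    (hz : ∀ v ∈ active A q, pairing v z = 0) : ∃ δ : ℝ, 0 < δ ∧ q + δ • z ∈ polarSet A := by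
  have hmem : ∀ᶠ δ : ℝ in 𝓝[>] 0, ∀ v ∈ A, pairing v (q + δ • z) ≤ 1 := by
    refine (eventually_all_finite hA).2 fun v hv => ?_
    rcases (pairing_le_one_of_mem_polarSet hq hv).lt_or_eq with hlt | heq
    · have hcont : Continuous fun δ : ℝ => pairing v (q + δ • z) := by fun_prop
      have hlim := (hcont.tendsto 0).mono_left (nhdsWithin_le_nhds (s := Set.Ioi 0))
      exact (hlim.eventually_lt_const (by simpa using hlt)).mono fun _ h => h.le
    · exact .of_forall fun δ => by simp [heq, hz v ⟨hv, heq⟩]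
  obtain ⟨δ, hδ, hpos⟩ := (hmem.and self_mem_nhdsWithin).exists
  exact ⟨δ, hpos, mem_polarSet_iff.2 hδ⟩

theorem isUniqueNormal_of_active_eq_singleton (hA : A.Finite) (hq : q ∈ polarSet A)
    (hu : active A q = {u}) : IsUniqueNormal (polarSet A) q u := by
  have hu' : u ∈ active A q := hu ▸ Set.mem_singleton u
  refine ⟨fun x hx => pairing_le_one_of_mem_polarSet hx hu'.1, hu'.2, fun v hv hvq => ?_⟩
  have hle (z : Fin n → ℝ) (hz : pairing u z = 0) : pairing v z ≤ 0 := by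
    obtain ⟨δ, hδ, hmem⟩ := exists_add_smul_mem_polarSet hA hq (z := z) (by simpa [hu] using hz)
    have hvδ := hv _ hmem
    rw [pairing_add_right, pairing_smul_right, hvq] at hvδ
    nlinarith
  have heq (z : Fin n → ℝ) : pairing v z = pairing u z := by
    have hz : pairing u (z - pairing u z • q) = 0 := by simp [hu'.2]
    have h₁ := hle _ hz
    have h₂ := hle (-(z - pairing u z • q)) (by rw [pairing_neg_right, hz, neg_zero])
    simp only [pairing_neg_right, pairing_sub_right, pairing_smul_right, hvq] at h₁ h₂
    linarith
  rw [← sub_eq_zero, ← pairing_self_eq_zero, pairing_sub_left, heq, sub_self]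

theorem suppFn_smul {c : ℝ} (hw : w ∈ B) (hx : x ∈ polarSet B) (hwx : pairing w x = 1)
    (hc : 0 ≤ c) : suppFn (polarSet B) (c • w) = c := by
  refine IsGreatest.csSup_eq ⟨⟨x, hx, ?_⟩, Set.forall_mem_image.2 fun y hy => ?_⟩
  · dsimp only
    rw [pairing_smul_right, pairing_comm, hwx, mul_one]
  · rw [pairing_smul_right]
    exact mul_le_of_le_one_right hc (hy w hw)

end Boundary

theorem apply_succ_mod {α : Type*} {f : ℕ → α} {m : ℕ} (hm : 0 < m) (hf : f m = f 0) (i : ℕ) :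
    f ((i + 1) % m) = f (i % m + 1) := by
  rw [← Nat.mod_add_mod]
  rcases (Nat.succ_le_of_lt (Nat.mod_lt i hm)).lt_or_eq with hlt | heq
  · rw [Nat.mod_eq_of_lt hlt]
  · rw [← Nat.succ_eq_add_one, heq, Nat.mod_self, hf]

namespace IsOrbit

variable {n m : ℕ} {A B : Set (Fin n → ℝ)} {x : ℕ → Bounce n} {lam mu : ℕ → ℝ}

theorem w_eq (ho : IsOrbit A B x lam mu) (hp : (x m).p = (x 0).p) : (x m).w = (x 0).w :=
  (ho.isRegular 0).eq_w (hp ▸ (ho.isRegular m).w_mem)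

/-- The closed trajectory formed by the first `m` bounces of an orbit, if the orbit returns to its
initial position after `m` bounces. -/
def closedTraj (ho : IsOrbit A B x lam mu) (hA : A.Finite) (hB : B.Finite) (hm : 0 < m)
    (hq : (x m).q = (x 0).q) (hp : (x m).p = (x 0).p) :
    ClassicalTraj n (polarSet A) (polarSet B) where
  m := m
  m_pos := hm
  q i := (x (i % m)).q
  p i := (x (i % m)).p
  nq i := (x (i % m)).u
  np i := (x (i % m)).w
  lam i := lam (i % m)
  mu i := mu (i % m)
  q_mem i := (mem_frontier_polarSet hA).2 ⟨(ho.isRegular _).q_mem, _, (ho.isRegular _).u_mem⟩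
  p_mem i := (mem_frontier_polarSet hB).2 ⟨(ho.isRegular _).p_mem, _, (ho.isRegular _).w_mem⟩
  q_periodic i := by rw [Nat.add_mod_right]
  p_periodic i := by rw [Nat.add_mod_right]
  nq_spec i := isUniqueNormal_of_active_eq_singleton hA (ho.isRegular _).q_mem
    (ho.isRegular _).active_q
  np_spec i := isUniqueNormal_of_active_eq_singleton hB (ho.isRegular _).p_mem
    (ho.isRegular _).active_p
  lam_pos i := (ho.isNext _).lam_pos
  mu_pos i := (ho.isNext _).mu_pos
  reflection i := by
    rw [apply_succ_mod (f := fun i => (x i).p) hm hp, (ho.isNext _).reflection,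
      sub_sub_cancel_left, neg_smul]
  motion i := by
    rw [apply_succ_mod (f := fun i => (x i).q) hm hq,
      apply_succ_mod (f := fun i => (x i).w) hm (ho.w_eq hp), (ho.isNext _).motion,
      add_sub_cancel_left]

theorem length_closedTraj (ho : IsOrbit A B x lam mu) (hA : A.Finite) (hB : B.Finite) (hm : 0 < m)
    (hq : (x m).q = (x 0).q) (hp : (x m).p = (x 0).p) :
    (ho.closedTraj hA hB hm hq hp).length = ∑ i ∈ Finset.range m, mu i := by
  refine Finset.sum_congr rfl fun i hi => ?_
  have hreg := ho.isRegular ((i + 1) % m)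
  rw [ClassicalTraj.motion]
  refine (suppFn_smul hreg.w_mem.1 hreg.p_mem hreg.w_mem.2 (ClassicalTraj.mu_pos _ i).le).trans ?_
  exact congrArg mu (Nat.mod_eq_of_lt (Finset.mem_range.1 hi))

theorem exists_classicalTraj (ho : IsOrbit A B x lam mu) (hAB : IsHannerPair A B) :
    ∃ τ : ClassicalTraj n (polarSet A) (polarSet B),
      τ.IsSimple ∧ τ.length = 4 ∧ τ.q 0 = (x 0).q ∧ τ.p 0 = (x 0).p := by
  obtain ⟨m, hm, hsum, hq, hp, hmin⟩ := ho.exists_period hAB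
  have hd := hAB.isDualPair
  refine ⟨ho.closedTraj hd.finite_left hd.finite_right hm hq hp, fun d hd₀ (hdm : d < m) hper => ?_,
    (ho.length_closedTraj ..).trans hsum, congrArg (fun i => (x i).q) m.zero_mod,
    congrArg (fun i => (x i).p) m.zero_mod⟩
  have hqd : (x ((0 + d) % m)).q = (x (0 % m)).q := (hper 0).1
  rw [zero_add, Nat.mod_eq_of_lt hdm, Nat.zero_mod] at hqd
  exact hmin d hd₀ hdm hqd

end IsOrbit

section Null

theorem hausdorffMeasure_linearMap_fiber_eq_zero {E F : Type*} [NormedAddCommGroup E]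
    [NormedSpace ℝ E] [FiniteDimensional ℝ E] [MeasurableSpace E] [BorelSpace E] [AddCommGroup F]
    [Module ℝ F] {L : E →ₗ[ℝ] F} (hL : Function.Surjective L) {d : ℝ}
    (hd : Module.finrank ℝ E < d + Module.finrank ℝ F) (y : F) : μH[d] (L ⁻¹' {y}) = 0 := by
  have hker : Module.finrank ℝ L.ker < d := by
    have hrank := L.finrank_range_add_finrank_ker
    rw [LinearMap.range_eq_top.2 hL, finrank_top] at hrank
    rw [← hrank] at hd
    push_cast at hd
    linarith
  lift d to NNReal using (Nat.cast_nonneg _).trans hker.le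
  obtain ⟨v, rfl⟩ := hL y
  have hiso : Isometry fun z : L.ker => v + (z : E) :=
    (IsometryEquiv.addLeft v).isometry.comp isometry_subtype_coe
  refine measure_mono_null (t := Set.range fun z : L.ker => v + (z : E))
    (fun x hx => ⟨⟨x - v, by simpa [sub_eq_zero] using hx⟩, by simp⟩)
    (hausdorffMeasure_of_dimH_lt ?_)
  rw [← Set.image_univ, hiso.dimH_image, Real.dimH_univ_eq_finrank]
  exact_mod_cast hker

theorem hausdorffMeasure_image_eq_zero_of_lipschitz {X Y : Type*} [EMetricSpace X]
    [MeasurableSpace X] [BorelSpace X] [EMetricSpace Y] [MeasurableSpace Y] [BorelSpace Y]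
    {f : X → Y} (hf : ∃ K, LipschitzWith K f) {d : ℝ} (hd : 0 ≤ d) {s : Set X}
    (hs : μH[d] s = 0) : μH[d] (f '' s) = 0 := by
  obtain ⟨K, hf⟩ := hf
  simpa [hs] using hf.hausdorffMeasure_image_le hd s

theorem exists_null_superset_mapsTo {X : Type*} [MeasurableSpace X] {μ : Measure X}
    {F : Set (X → X)} (hF : F.Countable) (hnull : ∀ f ∈ F, ∀ s, μ s = 0 → μ (f '' s) = 0)
    {S : Set X} (hS : μ S = 0) : ∃ N, S ⊆ N ∧ μ N = 0 ∧ ∀ f ∈ F, Set.MapsTo f N N := by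
  let T (k : ℕ) : Set X := (fun s => ⋃ f ∈ F, f '' s)^[k] S
  have hT (k : ℕ) : T (k + 1) = ⋃ f ∈ F, f '' T k := Function.iterate_succ_apply' ..
  refine ⟨⋃ k, T k, Set.subset_iUnion T 0, measure_iUnion_null fun k => ?_, fun f hf x hx => ?_⟩
  · induction k with
    | zero => exact hS
    | succ k ih =>
      rw [hT]
      exact (measure_biUnion_null_iff hF).2 fun f hf => hnull f hf _ ih
  · obtain ⟨k, hk⟩ := Set.mem_iUnion.1 hx
    exact Set.mem_iUnion.2 ⟨k + 1, hT k ▸ Set.mem_biUnion hf (Set.mem_image_of_mem f hk)⟩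

end Null

section Exceptional

variable {n : ℕ} {A B : Set (Fin n → ℝ)} {u v w x q d : Fin n → ℝ}

/-- The functional `⟨u, ·⟩` as a linear map. -/
noncomputable def pairingₗ (u : Fin n → ℝ) : (Fin n → ℝ) →ₗ[ℝ] ℝ := dotProductBilin ℝ ℝ u

@[simp]
theorem pairingₗ_apply (u x : Fin n → ℝ) : pairingₗ u x = pairing u x := rfl

theorem pairingₗ_surjective (hq : pairing u q = 1) : Function.Surjective (pairingₗ u) :=
  fun t => ⟨t • q, by simp [hq]⟩

theorem pairingₗ_prod_surjective (huv : u ≠ v) (hu : pairing u q = 1) (hv : pairing v q = 1) :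
    Function.Surjective ((pairingₗ u).prod (pairingₗ v)) := by
  obtain ⟨z, hz⟩ : ∃ z, pairing v z - pairing u z ≠ 0 := by
    refine ⟨v - u, fun h => huv ?_⟩
    rw [← pairing_sub_left, pairing_self_eq_zero, sub_eq_zero] at h
    exact h.symm
  intro ⟨s, t⟩
  set c := (t - s) / (pairing v z - pairing u z)
  have hc : c * (pairing v z - pairing u z) = t - s := div_mul_cancel₀ _ hz
  refine ⟨(s - c * pairing u z) • q + c • z, Prod.ext ?_ ?_⟩
  · simp [hu]
  · change pairing v ((s - c * pairing u z) • q + c • z) = t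
    rw [pairing_add_right, pairing_smul_right, pairing_smul_right, hv]
    linarith

/-- The pairs of a point on a face of codimension at least two of `polarSet A` and a boundary point
of `polarSet B`. -/
def cornerSet (A B : Set (Fin n → ℝ)) : Set ((Fin n → ℝ) × (Fin n → ℝ)) :=
  {x | (active A x.1).Nontrivial ∧ (active B x.2).Nonempty}

theorem hausdorffMeasure_cornerSet (hA : A.Finite) (hB : B.Finite) :
    μH[(2 * n - 2 : ℝ)] (cornerSet A B) = 0 := by
  have hnull (u v w : Fin n → ℝ) (huv : u ≠ v) : μH[(2 * n - 2 : ℝ)]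
      {x : (Fin n → ℝ) × (Fin n → ℝ) |
        pairing u x.1 = 1 ∧ pairing v x.1 = 1 ∧ pairing w x.2 = 1} = 0 := by
    rcases Set.eq_empty_or_nonempty {x : (Fin n → ℝ) × (Fin n → ℝ) |
      pairing u x.1 = 1 ∧ pairing v x.1 = 1 ∧ pairing w x.2 = 1} with h | ⟨x, hu, hv, hw⟩
    · rw [h, measure_empty]
    refine measure_mono_null (fun x hx => ?_) <| hausdorffMeasure_linearMap_fiber_eq_zero
      ((pairingₗ_prod_surjective huv hu hv).prodMap (pairingₗ_surjective hw))
      (L := ((pairingₗ u).prod (pairingₗ v)).prodMap (pairingₗ w)) ?_ ((1, 1), 1)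
    · exact Prod.ext (Prod.ext hx.1 hx.2.1) hx.2.2
    · simp only [Module.finrank_prod, Module.finrank_fin_fun, Module.finrank_self]
      push_cast
      linarith
  refine measure_mono_null (t := ⋃ uv ∈ A.offDiag, ⋃ w ∈ B,
    {x | pairing uv.1 x.1 = 1 ∧ pairing uv.2 x.1 = 1 ∧ pairing w x.2 = 1}) ?_ ?_
  · rintro x ⟨⟨u, hu, v, hv, huv⟩, w, hw⟩
    exact Set.mem_biUnion (x := (u, v)) ⟨hu.1, hv.1, huv⟩
      (Set.mem_biUnion hw.1 ⟨hu.2, hv.2, hw.2⟩)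
  · exact (measure_biUnion_null_iff (hA.offDiag).countable).2 fun uv huv =>
      (measure_biUnion_null_iff hB.countable).2 fun w _ => hnull _ _ w huv.2.2

/-- The projection along `d` onto the hyperplane `{x | ⟨w, x⟩ = 1}`; junk if `⟨w, d⟩ = 0`. -/
noncomputable def hyperplaneProj (d w x : Fin n → ℝ) : Fin n → ℝ :=
  x - ((pairing w x - 1) / pairing w d) • d

theorem hyperplaneProj_add_smul (c : ℝ) (hx : pairing w x = 1) (hd : pairing w d ≠ 0) :
    hyperplaneProj d w (x + c • d) = x := by
  rw [hyperplaneProj, pairing_add_right, pairing_smul_right, hx, add_sub_cancel_left,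
    mul_div_cancel_right₀ _ hd, add_sub_cancel_right]

theorem exists_lipschitzWith_hyperplaneProj (d w : Fin n → ℝ) :
    ∃ K, LipschitzWith K (hyperplaneProj d w) := by
  let L := LinearMap.id - ((pairing w d)⁻¹ • pairingₗ w).smulRight d
  have heq : hyperplaneProj d w = fun x => L.toContinuousLinearMap x + (pairing w d)⁻¹ • d := by
    ext1 x
    simp only [hyperplaneProj, L, LinearMap.coe_toContinuousLinearMap', LinearMap.sub_apply,
      LinearMap.id_apply, LinearMap.smulRight_apply, LinearMap.smul_apply, pairingₗ_apply,
      smul_eq_mul]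
    module
  exact ⟨_, heq ▸ L.toContinuousLinearMap.lipschitz.add (.const _)⟩

/-- A set of positions which is closed under inverting the two billiard moves, and contains the
positions at which a move ends on a face of codimension at least two. -/
structure IsExceptionalSet (A B : Set (Fin n → ℝ)) (N : Set ((Fin n → ℝ) × (Fin n → ℝ))) :
    Prop where
  cornerSet_subset : cornerSet A B ⊆ N
  swap_cornerSet_subset : Prod.swap '' cornerSet B A ⊆ N
  mapsTo_momentum : ∀ u ∈ A, ∀ w ∈ B, Set.MapsTo (Prod.map id (hyperplaneProj u w)) N N
  mapsTo_coord : ∀ u ∈ A, ∀ w ∈ B, Set.MapsTo (Prod.map (hyperplaneProj w u) id) N N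

theorem IsDualPair.exists_isExceptionalSet (h : IsDualPair A B) :
    ∃ N, IsExceptionalSet A B N ∧ μH[(2 * n - 2 : ℝ)] N = 0 := by
  have hd : (0 : ℝ) ≤ 2 * n - 2 := by
    have : (1 : ℝ) ≤ n := by exact_mod_cast h.one_le_dim
    linarith
  have hcorner := hausdorffMeasure_cornerSet h.finite_left h.finite_right
  have hcorner' := hausdorffMeasure_image_eq_zero_of_lipschitz (f := Prod.swap)
    ⟨_, LipschitzWith.prod_snd.prodMk LipschitzWith.prod_fst⟩ hd
    (hausdorffMeasure_cornerSet h.finite_right h.finite_left)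
  obtain ⟨N, hS, hN, hmaps⟩ := exists_null_superset_mapsTo
    (F := Set.image2 (fun u w => Prod.map id (hyperplaneProj u w)) A B ∪
      Set.image2 (fun u w => Prod.map (hyperplaneProj w u) id) A B)
    ((h.finite_left.image2 _ h.finite_right).union
      (h.finite_left.image2 _ h.finite_right)).countable
    (by
      rintro _ (⟨u, -, w, -, rfl⟩ | ⟨u, -, w, -, rfl⟩) s hs
      · obtain ⟨K, hK⟩ := exists_lipschitzWith_hyperplaneProj u w
        exact hausdorffMeasure_image_eq_zero_of_lipschitz
          ⟨_, LipschitzWith.prod_fst.prodMk (hK.comp .prod_snd)⟩ hd hs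
      · obtain ⟨K, hK⟩ := exists_lipschitzWith_hyperplaneProj w u
        exact hausdorffMeasure_image_eq_zero_of_lipschitz
          ⟨_, (hK.comp .prod_fst).prodMk LipschitzWith.prod_snd⟩ hd hs)
    (measure_union_null hcorner hcorner')
  exact ⟨N, ⟨Set.subset_union_left.trans hS, Set.subset_union_right.trans hS,
    fun u hu w hw => hmaps _ (Or.inl (Set.mem_image2_of_mem hu hw)),
    fun u hu w hw => hmaps _ (Or.inr (Set.mem_image2_of_mem hu hw))⟩, hN⟩

end Exceptional

section Continuation

variable {n : ℕ} {A B : Set (Fin n → ℝ)} {q p u w x d : Fin n → ℝ}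
  {N : Set ((Fin n → ℝ) × (Fin n → ℝ))}

theorem exists_exit (hA : A.Finite) (hx : x ∈ polarSet A) (hd : ∃ v ∈ A, 0 < pairing v d)
    (hactive : ∀ v ∈ active A x, pairing v d ≤ 0) :
    ∃ c : ℝ, 0 < c ∧ x + c • d ∈ polarSet A ∧ ∃ v ∈ active A (x + c • d), 0 < pairing v d := by
  obtain ⟨v, ⟨hv, hvd⟩, hmin⟩ := Set.exists_min_image {v ∈ A | 0 < pairing v d}
    (fun v => (1 - pairing v x) / pairing v d) (hA.subset (Set.sep_subset _ _)) hd
  have hlt : pairing v x < 1 := (pairing_le_one_of_mem_polarSet hx hv).lt_of_ne fun heq =>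
    hvd.not_ge (hactive v ⟨hv, heq⟩)
  have hc : 0 < (1 - pairing v x) / pairing v d := div_pos (sub_pos.2 hlt) hvd
  refine ⟨_, hc, mem_polarSet_iff.2 fun y hy => ?_, v, ⟨hv, ?_⟩, hvd⟩
  · have hyx := pairing_le_one_of_mem_polarSet hx hy
    rw [pairing_add_right, pairing_smul_right]
    rcases le_or_gt (pairing y d) 0 with hyd | hyd
    · nlinarith
    · have := (le_div_iff₀ hyd).1 (hmin y ⟨hy, hyd⟩)
      linarith
  · rw [pairing_add_right, pairing_smul_right, div_mul_cancel₀ _ hvd.ne', add_sub_cancel]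

namespace IsExceptionalSet

theorem isRegular (hN : IsExceptionalSet A B N) (hq : q ∈ polarSet A) (hp : p ∈ polarSet B)
    (hu : u ∈ active A q) (hw : w ∈ active B p) (hpos : 0 < pairing w u) (hqp : (q, p) ∉ N) :
    Bounce.IsRegular A B ⟨q, p, u, w⟩ where
  q_mem := hq
  p_mem := hp
  active_q := active_eq_singleton
    (Set.not_nontrivial_iff.1 fun h => hqp (hN.cornerSet_subset ⟨h, w, hw⟩)) hu
  active_p := active_eq_singleton (Set.not_nontrivial_iff.1 fun h =>
    hqp (hN.swap_cornerSet_subset ⟨(p, q), ⟨h, u, hu⟩, rfl⟩)) hw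
  pos := hpos

theorem exists_next (hN : IsExceptionalSet A B N) (hd : IsDualPair A B) {x : Bounce n}
    (hx : x.IsRegular A B) (hxN : (x.q, x.p) ∉ N) :
    ∃ (y : Bounce n) (lam mu : ℝ), (y.IsRegular A B ∧ (y.q, y.p) ∉ N) ∧ x.IsNext lam mu y := by
  obtain ⟨w, hw, hwu⟩ := hd.active_right_nonempty _ (hd.neg_mem_left _ hx.u_mem.1)
  obtain ⟨lam, hlam, hp', w', hw', hpos⟩ := exists_exit hd.finite_right hx.p_mem (d := -x.u)
    ⟨w, hw, hwu ▸ one_pos⟩ fun v hv => by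
      rw [hx.eq_w hv, pairing_neg_right]
      exact neg_nonpos.2 hx.pos.le
  have hneg : pairing x.u w' < 0 := by
    rw [pairing_neg_right, pairing_comm] at hpos
    exact neg_pos.1 hpos
  obtain ⟨u, hu, huw⟩ := hd.active_left_nonempty w' hw'.1
  obtain ⟨mu, hmu, hq', u', hu', hpos'⟩ := exists_exit hd.finite_left hx.q_mem (d := w')
    ⟨u, hu, huw ▸ one_pos⟩ fun _ hv => hx.eq_u hv ▸ hneg.le
  rw [smul_neg, ← sub_eq_add_neg] at hp' hw'
  have hpN : (x.q, x.p - lam • x.u) ∉ N := fun hmem => hxN <| by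
    have hback := hN.mapsTo_momentum _ hx.u_mem.1 _ hx.w_mem.1 hmem
    rwa [Prod.map_apply, sub_eq_add_neg, ← neg_smul,
      hyperplaneProj_add_smul _ hx.w_mem.2 hx.pos.ne'] at hback
  have hqN : (x.q + mu • w', x.p - lam • x.u) ∉ N := fun hmem => hpN <| by
    have hback := hN.mapsTo_coord _ hx.u_mem.1 _ hw'.1 hmem
    rwa [Prod.map_apply, hyperplaneProj_add_smul _ hx.u_mem.2 hneg.ne] at hback
  exact ⟨⟨_, _, u', w'⟩, lam, mu,
    ⟨hN.isRegular hq' hp' hu' hw' (pairing_comm u' w' ▸ hpos') hqN, hqN⟩,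
    ⟨hlam, hmu, hneg, rfl, rfl⟩⟩

theorem exists_isOrbit (hN : IsExceptionalSet A B N) (hd : IsDualPair A B) {x₀ : Bounce n}
    (hx₀ : x₀.IsRegular A B) (hx₀N : (x₀.q, x₀.p) ∉ N) :
    ∃ x lam mu, IsOrbit A B x lam mu ∧ x 0 = x₀ := by
  have : Nonempty (Bounce n) := ⟨x₀⟩
  choose! next lam mu hnext using fun (x : Bounce n) (hx : x.IsRegular A B ∧ (x.q, x.p) ∉ N) =>
    hN.exists_next hd hx.1 hx.2
  have hgood (i : ℕ) : (next^[i] x₀).IsRegular A B ∧ ((next^[i] x₀).q, (next^[i] x₀).p) ∉ N := by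
    induction i with
    | zero => exact ⟨hx₀, hx₀N⟩
    | succ i ih => exact Function.iterate_succ_apply' next i x₀ ▸ (hnext _ ih).1
  refine ⟨fun i => next^[i] x₀, fun i => lam (next^[i] x₀), fun i => mu (next^[i] x₀),
    ⟨fun i => (hgood i).1, fun i => ?_⟩, rfl⟩
  rw [Function.iterate_succ_apply']
  exact (hnext _ (hgood i)).2

end IsExceptionalSet

end Continuation

end Billiard

open Billiard in
/-- In a Hanner polytope `H`, among all initial positions `(q₁, p₁) ∈ ∂H × ∂H°` such that
`−n_H(q₁)` placed at `p₁` points into the interior of `H°`, all but a lower-dimensional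
(`(2n−2)`-Hausdorff-null) set generate a closed simple classical billiard trajectory of
length 4 in the configuration `H × H°`. -/
theorem hanner_generic_initial_position (n : ℕ) (H : Set (Fin n → ℝ))
    (hH : IsHanner n H) :
    ∃ N : Set ((Fin n → ℝ) × (Fin n → ℝ)),
      μH[(2 * n - 2 : ℝ)] N = 0 ∧
      ∀ q₁ p₁ : Fin n → ℝ, q₁ ∈ frontier H → p₁ ∈ frontier (polarSet H) →
        (∃ u, IsUniqueNormal H q₁ u ∧
          ∃ ε : ℝ, 0 < ε ∧ p₁ - ε • u ∈ interior (polarSet H)) →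
        (q₁, p₁) ∉ N →
        ∃ τ : ClassicalTraj n H (polarSet H),
          τ.IsSimple ∧ τ.length = 4 ∧ τ.q 0 = q₁ ∧ τ.p 0 = p₁ := by
  obtain ⟨A, B, hAB, rfl⟩ := hH.exists_isHannerPair
  have hd := hAB.isDualPair
  obtain ⟨N, hN, hnull⟩ := hd.exists_isExceptionalSet
  refine ⟨N, hnull, fun q₁ p₁ hq hp ⟨u, hu, ε, hε, hinterior⟩ hqp => ?_⟩
  rw [hd.polarSet_polarSet] at hp hinterior ⊢
  obtain ⟨hqA, v, hv⟩ := (mem_frontier_polarSet hd.finite_left).1 hq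
  obtain ⟨hpB, w, hw⟩ := (mem_frontier_polarSet hd.finite_right).1 hp
  obtain rfl : v = u := hu.2.2 v (fun x hx => pairing_le_one_of_mem_polarSet hx hv.1) hv.2
  have hpos : 0 < pairing w v := by
    have hlt := pairing_lt_one_of_mem_interior hinterior hw.1
    rw [pairing_sub_right, pairing_smul_right, hw.2] at hlt
    exact pos_of_mul_pos_right (by linarith) hε.le
  obtain ⟨x, lam, mu, ho, hx₀⟩ :=
    hN.exists_isOrbit hd (hN.isRegular hqA hpB hv hw hpos hqp) hqp
  simpa only [hx₀] using ho.exists_classicalTraj hAB
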